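/- arXiv:1003.0021 — 15 statements merged into one kernel-verified Lean document; each statement's English description precedes it below -/
import Mathlib

section
/- For every integer k ≥ 1 and every integer n > 6k+3, the largest integer having exactly k representations as a non-negative integer linear combination of the 5-tuple X_n = (2n-2, 2n-1, 2n, 3n-3, 3n) is (6k+3)n - 1; that is, R_{X_n}((6k+3)n - 1) = k and every integer t > (6k+3)n - 1 satisfies R_{X_n}(t) ≠ k. -/
/-!
Write `n = N + 1`. A coefficient vector `c` for `X n` has the two statistics
`u = 2 c₀ + c₁ + 3 c₃` and `w = c₁ + 2 c₂ + 3 c₄`, and it represents `N (u + w) + w`.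

For `t = (6k+3)n - 1` the size of `N` forces `u = 1`, `w = 6k+2`, hence `c₀ = c₃ = 0`, `c₁ = 1` and
`2 c₂ + 3 c₄ = 6k+1`, which has exactly `k` solutions (`reps_ncard_eq`).

For larger `t`, either there is no representation at all, or some representation exists and its
statistics `(u, w)` satisfy `u + w ≥ 6k+4` or `(u, w) = (0, 6k+3)`. All vectors with the same
statistics represent `t` too, and there are more than `k` of them (`fiber_large`, `fiber_base`): this is an
induction on `min u w`, where raising `c₁` by one maps the vectors with statistics `(u, w)`
injectively to those with statistics `(u+1, w+1)`, and misses one that has `c₁ = 0`.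
-/

/-- Number of representations of `t` as a non-negative integer linear
combination of the entries of the tuple `x`. -/
noncomputable def numRep (x : List ℕ) (t : ℕ) : ℕ :=
  Nat.card {c : Fin x.length → ℕ // ∑ i, c i * x.get i = t}

/-- `t` is representable as a non-negative integer linear combination of the
entries of the tuple `x`. -/
def Representable (x : List ℕ) (t : ℕ) : Prop :=
  ∃ c : Fin x.length → ℕ, ∑ i, c i * x.get i = t

/-- No entry of the tuple `x` is a non-negative integer linear combination of
the other entries. -/
def Reasonable (x : List ℕ) : Prop :=
  ∀ i : Fin x.length, ¬ ∃ c : Fin x.length → ℕ,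
    c i = 0 ∧ ∑ j, c j * x.get j = x.get i

/-- The 5-tuple `X_n = (2n-2, 2n-1, 2n, 3n-3, 3n)`. -/
def X (n : ℕ) : List ℕ := [2*n-2, 2*n-1, 2*n, 3*n-3, 3*n]

/-- The n-tuple `Y_n = (n+1, n+4, n+5, n+7, n+8, ..., 2n+1, 2n+3, 2n+4)`. -/
def Y (n : ℕ) : List ℕ :=
  [n+1, n+4, n+5] ++ List.range' (n+7) (n-5) ++ [2*n+3, 2*n+4]

/-- The coefficient vectors `c` with `2 c₀ + c₁ + 3 c₃ = u` and `c₁ + 2 c₂ + 3 c₄ = w`. -/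
def fiber (u w : ℕ) : Set (Fin 5 → ℕ) :=
  {c | 2 * c 0 + c 1 + 3 * c 3 = u ∧ c 1 + 2 * c 2 + 3 * c 4 = w}

/-- The coefficient vectors representing `t` by `X (N + 1)`, written in terms of the two
statistics `2 c₀ + c₁ + 3 c₃` and `c₁ + 2 c₂ + 3 c₄`. -/
def reps (N t : ℕ) : Set (Fin 5 → ℕ) :=
  {c | N * ((2 * c 0 + c 1 + 3 * c 3) + (c 1 + 2 * c 2 + 3 * c 4))
    + (c 1 + 2 * c 2 + 3 * c 4) = t}

lemma numRep_X (N t : ℕ) : numRep (X (N + 1)) t = (reps N t).ncard := by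
  have h : ∀ c : Fin 5 → ℕ, (∑ i : Fin 5, c i * (X (N + 1)).get i = t) ↔ c ∈ reps N t := by
    intro c
    have h1 : 2 * (N + 1) - 2 = 2 * N := by omega
    have h2 : 2 * (N + 1) - 1 = 2 * N + 1 := by omega
    have h3 : 3 * (N + 1) - 3 = 3 * N := by omega
    have e : ∑ i : Fin 5, c i * (X (N + 1)).get i =
        c 0 * (2 * N) + c 1 * (2 * N + 1) + c 2 * (2 * (N + 1)) + c 3 * (3 * N)
          + c 4 * (3 * (N + 1)) := by
      rw [Fin.sum_univ_five, ← h2, ← h1, ← h3]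
      rfl
    rw [e, reps, Set.mem_ofPred_eq]
    constructor <;> intro h <;> rw [← h] <;> ring
  rw [← Nat.card_coe_set_eq]
  exact Nat.card_congr (Equiv.subtypeEquivRight h)

lemma reps_finite {N : ℕ} (hN : 0 < N) (t : ℕ) : (reps N t).Finite := by
  refine (Set.finite_Iic (fun _ : Fin 5 => t)).subset fun c hc => ?_
  have hc' : N * ((2 * c 0 + c 1 + 3 * c 3) + (c 1 + 2 * c 2 + 3 * c 4))
    + (c 1 + 2 * c 2 + 3 * c 4) = t := hc
  have := Nat.le_mul_of_pos_left ((2 * c 0 + c 1 + 3 * c 3) + (c 1 + 2 * c 2 + 3 * c 4)) hN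
  intro i
  fin_cases i <;> simp <;> omega

lemma fiber_finite (u w : ℕ) : (fiber u w).Finite := by
  refine (reps_finite one_pos (u + w + w)).subset fun c hc => ?_
  obtain ⟨h1, h2⟩ := hc
  simp only [reps, Set.mem_ofPred_eq]
  omega

lemma fiber_ncard_swap (u w : ℕ) : (fiber u w).ncard ≤ (fiber w u).ncard := by
  refine Set.ncard_le_ncard_of_injOn (fun c => ![c 2, c 1, c 0, c 4, c 3]) ?_ ?_ (fiber_finite _ _)
  · rintro c ⟨h1, h2⟩
    simp [fiber]
    omega
  · intro c _ d _ h
    simp at h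
    ext i
    fin_cases i <;> simp [h]

/-- The vectors `(0, u, *, 0, *)` alone suffice when `w - u` is large, in particular in the base
cases `u ≤ 1` of the induction. -/
lemma fiber_base {k u w : ℕ} (hw : 6 * k + 2 + u ≤ w) :
    k + 1 ≤ (fiber u w).ncard := by
  have := Set.ncard_le_ncard_of_injOn (s := (Finset.range (k + 1) : Set ℕ)) (t := fiber u w)
    (fun i => ![0, u, (w - u - 3 * ((w - u) % 2 + 2 * i)) / 2, 0, (w - u) % 2 + 2 * i]) ?_ ?_
    (fiber_finite _ _)
  · rwa [Set.ncard_coe_finset, Finset.card_range] at this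
  · intro i hi
    simp at hi
    simp [fiber]
    omega
  · intro i _ j _ h
    simp at h
    omega

/-- Raising the second coefficient embeds `fiber u w` into `fiber (u+1) (w+1)`; a vector with
second coefficient `0`, which exists for `u, w ≥ 1`, is not in the image. -/
lemma fiber_succ {u w : ℕ} (hu : 1 ≤ u) (hw : 1 ≤ w) :
    (fiber u w).ncard + 1 ≤ (fiber (u + 1) (w + 1)).ncard := by
  let f : (Fin 5 → ℕ) → (Fin 5 → ℕ) := fun c => ![c 0, c 1 + 1, c 2, c 3, c 4]
  have hf : Function.Injective f := by
    intro c d h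
    simp [f] at h
    ext i
    fin_cases i <;> simp [h]
  -- `x = 2 * ((x - 3 * (x % 2)) / 2) + 3 * (x % 2)` for every `x ≥ 2`
  let z : Fin 5 → ℕ := ![(u + 1 - 3 * ((u + 1) % 2)) / 2, 0, (w + 1 - 3 * ((w + 1) % 2)) / 2,
    (u + 1) % 2, (w + 1) % 2]
  have hz : z ∉ f '' fiber u w := by
    rintro ⟨c, _, h⟩
    have := congrFun h 1
    simp [f, z] at this
  rw [← Set.ncard_image_of_injective _ hf,
    ← Set.ncard_insert_of_notMem hz ((fiber_finite _ _).image _)]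
  refine Set.ncard_le_ncard ?_ (fiber_finite _ _)
  rintro _ (rfl | ⟨c, ⟨h1, h2⟩, rfl⟩)
  · simp [fiber, z]
    omega
  · simp [fiber, f]
    omega

lemma fiber_large_of_le (u : ℕ) : ∀ k w, u ≤ w → 6 * k + 4 ≤ u + w →
    k + 1 ≤ (fiber u w).ncard := by
  induction u with
  | zero => exact fun k w _ h => fiber_base (by omega)
  | succ u ih =>
    intro k w hle h
    rcases Nat.eq_zero_or_pos u with rfl | hu
    · exact fiber_base (by omega)
    obtain ⟨w, rfl⟩ : ∃ v, w = v + 1 := ⟨w - 1, by omega⟩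
    have hs := fiber_succ hu (show 1 ≤ w by omega)
    rcases k with _ | k
    · omega
    · have := ih k w (by omega) (by omega)
      omega

lemma fiber_large {k u w : ℕ} (h : 6 * k + 4 ≤ u + w) : k + 1 ≤ (fiber u w).ncard := by
  rcases le_total u w with hle | hle
  · exact fiber_large_of_le u k w hle h
  · exact (fiber_large_of_le w k u hle (by omega)).trans (fiber_ncard_swap w u)

lemma reps_ncard_eq {k N : ℕ} (hN : 6 * k + 3 ≤ N) :
    (reps N (N * (6 * k + 3) + (6 * k + 2))).ncard = k := by
  have key : reps N (N * (6 * k + 3) + (6 * k + 2)) =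
      (fun i => ![0, 1, 3 * (k - i) - 1, 0, 2 * i + 1]) '' (Finset.range k : Set ℕ) := by
    ext c
    simp only [reps, Set.mem_ofPred_eq, Set.mem_image, Finset.coe_range, Set.mem_Iio]
    constructor
    · intro h
      obtain ⟨u, hu⟩ : ∃ u, u = 2 * c 0 + c 1 + 3 * c 3 := ⟨_, rfl⟩
      obtain ⟨w, hw⟩ : ∃ w, w = c 1 + 2 * c 2 + 3 * c 4 := ⟨_, rfl⟩
      rw [← hu, ← hw] at h
      have hS : u + w = 6 * k + 3 := by
        apply le_antisymm
        · by_contra hlt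
          have := Nat.mul_le_mul_left N (show 6 * k + 4 ≤ u + w by omega)
          nlinarith
        · by_contra hlt
          have := Nat.mul_le_mul_left N (show u + w ≤ 6 * k + 2 by omega)
          nlinarith
      rw [hS] at h
      refine ⟨c 4 / 2, by omega, ?_⟩
      ext i
      fin_cases i <;> simp <;> omega
    · rintro ⟨i, hi, rfl⟩
      have h2 : 1 + 2 * (3 * (k - i) - 1) + 3 * (2 * i + 1) = 6 * k + 2 := by omega
      simp [h2]
      left
      omega
  rw [key, Set.ncard_image_of_injective, Set.ncard_coe_finset, Finset.card_range]
  intro i j h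
  simp at h
  omega

lemma reps_ncard_ne {k N t : ℕ} (hk : 1 ≤ k) (hN : 0 < N)
    (ht : N * (6 * k + 3) + (6 * k + 2) < t) : (reps N t).ncard ≠ k := by
  rcases (reps N t).eq_empty_or_nonempty with h | ⟨c, hc⟩
  · rw [h, Set.ncard_empty]
    omega
  obtain ⟨u, hu⟩ : ∃ u, u = 2 * c 0 + c 1 + 3 * c 3 := ⟨_, rfl⟩
  obtain ⟨w, hw⟩ : ∃ w, w = c 1 + 2 * c 2 + 3 * c 4 := ⟨_, rfl⟩
  have hc' : N * (u + w) + w = t := by rw [hu, hw]; exact hc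
  have hsub : fiber u w ⊆ reps N t := by
    rintro d ⟨h1, h2⟩
    rw [reps, Set.mem_ofPred_eq, h1, h2, hc']
  have hle := Set.ncard_le_ncard hsub (reps_finite hN t)
  have hS : 6 * k + 3 ≤ u + w := by
    by_contra hlt
    have := Nat.mul_le_mul_left N (show u + w ≤ 6 * k + 3 by omega)
    omega
  have hcard : k + 1 ≤ (fiber u w).ncard := by
    rcases Nat.eq_or_lt_of_le hS with hS | hS
    · rw [← hS] at hc'
      -- here `w ≥ 6k+3 = u + w`, so `u = 0`
      exact fiber_base (by omega)
    · exact fiber_large hS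
  omega

/-- For every integer `k ≥ 1` and every integer `n > 6k+3`, the largest integer
having exactly `k` representations as a non-negative integer linear combination
of `X_n = (2n-2, 2n-1, 2n, 3n-3, 3n)` is `(6k+3)n - 1`. -/
theorem stmt0 (k n : ℕ) (hk : 1 ≤ k) (hn : 6 * k + 3 < n) :
    numRep (X n) ((6 * k + 3) * n - 1) = k ∧
      ∀ t : ℕ, (6 * k + 3) * n - 1 < t → numRep (X n) t ≠ k := by
  obtain ⟨N, rfl⟩ : ∃ N, n = N + 1 := ⟨n - 1, by omega⟩
  have ht : (6 * k + 3) * (N + 1) - 1 = N * (6 * k + 3) + (6 * k + 2) := by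
    rw [Nat.mul_succ, Nat.mul_comm]
    omega
  rw [ht]
  refine ⟨?_, fun t h => ?_⟩
  · rw [numRep_X]
    exact reps_ncard_eq (by omega)
  · rw [numRep_X]
    exact reps_ncard_ne hk (by omega) h
end

section
/- For every integer n ≥ 6, the Frobenius number of the 5-tuple X_n = (2n-2, 2n-1, 2n, 3n-3, 3n) equals n² - 3n + 1; that is, R_{X_n}(n² - 3n + 1) = 0 and every integer t > n² - 3n + 1 satisfies R_{X_n}(t) ≥ 1. -/
lemma sum_X (n : ℕ) (c : Fin (X n).length → ℕ) :
    ∑ i, c i * (X n).get i =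
      c (0 : Fin 5) * (2 * n - 2) + c (1 : Fin 5) * (2 * n - 1) + c (2 : Fin 5) * (2 * n)
        + c (3 : Fin 5) * (3 * n - 3) + c (4 : Fin 5) * (3 * n) :=
  Fin.sum_univ_five (fun i : Fin 5 => c i * (X n).get i)

/-- Positivity of the entries makes the set of representations finite, so that its `Nat.card` is
not the junk value `0` of an infinite type. -/
lemma finite_reps (n t : ℕ) (hn : 6 ≤ n) :
    Finite {c : Fin (X n).length → ℕ // ∑ i, c i * (X n).get i = t} := by
  refine Set.Finite.to_subtype (s := {c | ∑ i, c i * (X n).get i = t})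
    ((Set.finite_Iic (fun _ => t)).subset ?_)
  intro c hc i
  have hpos : 1 ≤ (X n).get i := by
    have hmem := List.get_mem (X n) i
    generalize (X n).get i = y at hmem
    simp only [X, List.mem_cons, List.not_mem_nil, or_false] at hmem
    omega
  have hle : c i * (X n).get i ≤ ∑ j, c j * (X n).get j :=
    Finset.single_le_sum (f := fun j => c j * (X n).get j)
      (fun _ _ => Nat.zero_le _) (Finset.mem_univ i)
  calc c i ≤ c i * (X n).get i := Nat.le_mul_of_pos_right _ hpos
    _ ≤ t := hle.trans_eq hc

/-- For `k ≥ 4`, every surplus `s ≤ k` is attained by a combination of weight `k`. -/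
lemma exists_coeffs (k s : ℕ) (hk : 4 ≤ k) (hs : s ≤ k) :
    ∃ a b c d e : ℕ, 2 * (a + b + c) + 3 * (d + e) = k ∧ b + 2 * c + 3 * e = s := by
  rcases Nat.even_or_odd' k with ⟨p, rfl | rfl⟩
  · exact ⟨p - s % 2 - s / 2, s % 2, s / 2, 0, 0, by omega, by omega⟩
  · -- An odd weight uses exactly one of the entries `3n-3` and `3n`.
    by_cases h : 3 ≤ s
    · exact ⟨p - 1 - (s - 3) % 2 - (s - 3) / 2, (s - 3) % 2, (s - 3) / 2, 0, 1,
        by omega, by omega⟩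
    · exact ⟨p - 1 - s % 2 - s / 2, s % 2, s / 2, 1, 0, by omega, by omega⟩

/-- For every integer `n ≥ 6`, the Frobenius number of
`X_n = (2n-2, 2n-1, 2n, 3n-3, 3n)` equals `n^2 - 3n + 1`. -/
theorem stmt1 (n : ℕ) (hn : 6 ≤ n) :
    numRep (X n) (n ^ 2 - 3 * n + 1) = 0 ∧
      ∀ t : ℕ, n ^ 2 - 3 * n + 1 < t → 1 ≤ numRep (X n) t := by
  -- The substitution `n = m + 3` removes the truncated subtractions.
  obtain ⟨m, rfl⟩ : ∃ m, n = m + 3 := ⟨n - 3, by omega⟩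
  have hF : (m + 3) ^ 2 - 3 * (m + 3) + 1 = m * (m + 3) + 1 := by
    have : (m + 3) ^ 2 = m * (m + 3) + 3 * (m + 3) := by ring
    omega
  have e0 : 2 * (m + 3) - 2 = 2 * (m + 2) := by omega
  have e1 : 2 * (m + 3) - 1 = 2 * (m + 2) + 1 := by omega
  have e3 : 3 * (m + 3) - 3 = 3 * (m + 2) := by omega
  rw [hF]
  constructor
  · have : IsEmpty {c : Fin (X (m + 3)).length → ℕ //
        ∑ i, c i * (X (m + 3)).get i = m * (m + 3) + 1} := by
      refine ⟨fun ⟨f, hf⟩ => ?_⟩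
      rw [sum_X, e0, e1, e3] at hf
      generalize f (0 : Fin 5) = a, f (1 : Fin 5) = b, f (2 : Fin 5) = c,
        f (3 : Fin 5) = d, f (4 : Fin 5) = e at hf
      obtain ⟨k, hk⟩ : ∃ k, k = 2 * (a + b + c) + 3 * (d + e) := ⟨_, rfl⟩
      have hsum : k * (m + 2) + (b + 2 * c + 3 * e) = m * (m + 3) + 1 := by
        rw [← hf, hk]; ring
      rcases Nat.lt_or_ge m k with h | h
      · have := Nat.mul_le_mul_right (m + 2) (Nat.succ_le_of_lt h)
        nlinarith
      · have := Nat.mul_le_mul_right (m + 2) h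
        have : b + 2 * c + 3 * e ≤ k := by omega
        nlinarith
    exact Nat.card_of_isEmpty
  · intro t ht
    have hdiv := Nat.div_add_mod t (m + 2)
    have hmod := Nat.mod_lt t (show 0 < m + 2 by omega)
    have hk : m + 1 ≤ t / (m + 2) := by
      rw [Nat.le_div_iff_mul_le (by omega)]
      nlinarith
    obtain ⟨a, b, c, d, e, h1, h2⟩ :=
      exists_coeffs (t / (m + 2)) (t % (m + 2)) (by omega) (by omega)
    have hfin := finite_reps (m + 3) t hn
    have hne : Nonempty {c : Fin (X (m + 3)).length → ℕ //
        ∑ i, c i * (X (m + 3)).get i = t} := by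
      refine ⟨⟨(![a, b, c, d, e] : Fin 5 → ℕ), ?_⟩⟩
      refine (sum_X (m + 3) (![a, b, c, d, e] : Fin 5 → ℕ)).trans ?_
      rw [e0, e1, e3]
      change a * (2 * (m + 2)) + b * (2 * (m + 2) + 1) + c * (2 * (m + 3))
        + d * (3 * (m + 2)) + e * (3 * (m + 3)) = t
      rw [← hdiv, ← h1, ← h2]
      ring
    exact Nat.card_pos
end

section
/- For every integer n ≥ 4 and every integer k ≥ 1, the integer (6k+3)n - 1 has at least k representations as a non-negative integer linear combination of X_n = (2n-2, 2n-1, 2n, 3n-3, 3n); that is, R_{X_n}((6k+3)n - 1) ≥ k. -/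
/-- A number has finitely many representations by positive generators: every
coefficient is bounded by the number itself. -/
theorem finite_representations (x : List ℕ) (hx : ∀ i : Fin x.length, 0 < x.get i) (t : ℕ) :
    Finite {c : Fin x.length → ℕ // ∑ i, c i * x.get i = t} := by
  refine Set.Finite.subset (Set.finite_Iic (fun _ : Fin x.length => t)) ?_
  intro c hc i
  calc c i ≤ c i * x.get i := Nat.le_mul_of_pos_right _ (hx i)
    _ ≤ ∑ i, c i * x.get i :=
        Finset.single_le_sum (f := fun i => c i * x.get i)
          (fun _ _ => Nat.zero_le _) (Finset.mem_univ i)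
    _ = t := hc

/-- The `j`-th representation of `(6k+3)n - 1` by `X n`, meaningful for `j < k`:
`2n-1` once, `2n` taken `3(k-1-j) + 2` times, and `3n` taken `2j+1` times. -/
def representation (n k j : ℕ) : Fin (X n).length → ℕ :=
  (![0, 1, 3 * (k - 1 - j) + 2, 0, 2 * j + 1] : Fin 5 → ℕ)

/-- For every integer `n ≥ 4` and every integer `k ≥ 1`, the integer
`(6k+3)n - 1` has at least `k` representations as a non-negative integer linear
combination of `X_n = (2n-2, 2n-1, 2n, 3n-3, 3n)`. -/
theorem stmt2 (n k : ℕ) (hn : 4 ≤ n) (hk : 1 ≤ k) :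
    k ≤ numRep (X n) ((6 * k + 3) * n - 1) := by
  have hpos : ∀ i : Fin (X n).length, 0 < (X n).get i := by
    have hmem : ∀ y ∈ X n, 0 < y := by
      intro y hy
      simp only [X, List.mem_cons, List.not_mem_nil, or_false] at hy
      omega
    exact fun i => hmem _ (List.get_mem _ _)
  have hfin := finite_representations (X n) hpos ((6 * k + 3) * n - 1)
  have hsum : ∀ j < k,
      ∑ i, representation n k j i * (X n).get i = (6 * k + 3) * n - 1 := by
    intro j hj
    obtain ⟨d, rfl⟩ : ∃ d, k = j + 1 + d := ⟨k - 1 - j, by omega⟩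
    have hsub : j + 1 + d - 1 - j = d := by omega
    change ∑ i : Fin 5, ![0, 1, 3 * (j + 1 + d - 1 - j) + 2, 0, 2 * j + 1] i *
      [2*n-2, 2*n-1, 2*n, 3*n-3, 3*n].get i = _
    rw [hsub]
    simp [Fin.sum_univ_succ]
    zify [show 1 ≤ 2 * n by omega, show 1 ≤ (6 * (j + 1 + d) + 3) * n by nlinarith]
    ring
  let f : Fin k → {c : Fin (X n).length → ℕ //
      ∑ i, c i * (X n).get i = (6 * k + 3) * n - 1} :=
    fun j => ⟨representation n k j, hsum j j.isLt⟩
  have hf : Function.Injective f := by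
    intro a b hab
    have hlast : 2 * (a : ℕ) + 1 = 2 * (b : ℕ) + 1 :=
      congrFun (congrArg Subtype.val hab) (4 : Fin 5)
    exact Fin.ext (by omega)
  simpa [numRep] using Nat.card_le_card_of_injective f hf
end

section
/- For every integer k ≥ 1 and every integer n > 6k+3, the integer (6k+3)n - 1 has exactly k representations as a non-negative integer linear combination of X_n = (2n-2, 2n-1, 2n, 3n-3, 3n); that is, R_{X_n}((6k+3)n - 1) = k. -/
/-- The representation equation forces `S = 6k+3` and `L = 1` in the notation above,
which pins down `a`, `b`, `d` and leaves a linear equation in `c` and `e`. -/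
theorem rep_iff {k n : ℕ} (hn : 6 * k + 3 < n) (a b c d e : ℕ) :
    a * (2*n-2) + b * (2*n-1) + c * (2*n) + d * (3*n-3) + e * (3*n) = (6 * k + 3) * n - 1 ↔
      a = 0 ∧ b = 1 ∧ d = 0 ∧ 2 * c + 3 * e = 6 * k + 1 := by
  obtain ⟨m, rfl⟩ : ∃ m, n = m + 1 := ⟨n - 1, by omega⟩
  have h1 : 2 * (m + 1) - 2 = 2 * m := by omega
  have h2 : 2 * (m + 1) - 1 = 2 * m + 1 := by omega
  have h3 : 3 * (m + 1) - 3 = 3 * m := by omega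
  have h4 : (6 * k + 3) * (m + 1) - 1 = (6 * k + 3) * m + (6 * k + 2) := by
    rw [mul_add]; omega
  rw [h1, h2, h3, h4]
  constructor
  · intro h
    -- With `m = n - 1` this is `S m + (S - L) = (6k+3) m + (6k+2)`, where `6k+2 < m`.
    have key : (2 * (a + b + c) + 3 * (d + e)) * m + (b + 2 * c + 3 * e)
        = (6 * k + 3) * m + (6 * k + 2) := by linarith
    have hS : 2 * (a + b + c) + 3 * (d + e) = 6 * k + 3 := by
      rcases lt_trichotomy (2 * (a + b + c) + 3 * (d + e)) (6 * k + 3) with hlt | heq | hgt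
      · -- Here `S - L ≤ S ≤ 6k+2`, so the left side is too small.
        nlinarith
      · exact heq
      · nlinarith
    rw [hS] at key
    omega
  · rintro ⟨rfl, rfl, rfl, h⟩
    linear_combination (m + 1) * h

/-- For every integer `k ≥ 1` and every integer `n > 6k+3`, the integer
`(6k+3)n - 1` has exactly `k` representations as a non-negative integer linear
combination of `X_n = (2n-2, 2n-1, 2n, 3n-3, 3n)`. -/
theorem stmt3 (k n : ℕ) (hk : 1 ≤ k) (hn : 6 * k + 3 < n) :
    numRep (X n) ((6 * k + 3) * n - 1) = k := by
  let f : Fin k → {c : Fin (X n).length → ℕ // ∑ i, c i * (X n).get i = (6 * k + 3) * n - 1} :=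
    fun i => ⟨(![0, 1, 3 * k - 1 - 3 * i, 0, 2 * i + 1] : Fin 5 → ℕ), by
      refine (Fin.sum_univ_five _).trans ((rep_iff hn _ _ _ _ _).2 ⟨rfl, rfl, rfl, ?_⟩)
      have := i.isLt
      change 2 * (3 * k - 1 - 3 * (i : ℕ)) + 3 * (2 * (i : ℕ) + 1) = 6 * k + 1
      omega⟩
  have hf : Function.Bijective f := by
    constructor
    · intro i j hij
      have h : 2 * (i : ℕ) + 1 = 2 * (j : ℕ) + 1 :=
        congrFun (congrArg Subtype.val hij) (4 : Fin 5)
      exact Fin.ext (by omega)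
    · rintro ⟨c, hc⟩
      obtain ⟨h0, h1, h3, h⟩ :=
        (rep_iff hn _ _ _ _ _).1
          ((Fin.sum_univ_five (fun i : Fin 5 => c i * (X n).get i)).symm.trans hc)
      refine ⟨⟨c (4 : Fin 5) / 2, by omega⟩, Subtype.ext ?_⟩
      change (![0, 1, 3 * k - 1 - 3 * (c (4 : Fin 5) / 2), 0, 2 * (c (4 : Fin 5) / 2) + 1] :
        Fin 5 → ℕ) = c
      funext i
      change Fin 5 at i
      fin_cases i
      · exact h0.symm
      · exact h1.symm
      · change 3 * k - 1 - 3 * (c (4 : Fin 5) / 2) = c (2 : Fin 5)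
        omega
      · exact h3.symm
      · change 2 * (c (4 : Fin 5) / 2) + 1 = c (4 : Fin 5)
        omega
  rw [numRep, ← Nat.card_eq_of_bijective f hf, Nat.card_fin]
end

section
/- For every integer n ≥ 4 and every integer k with k = 2 or k ≥ 4, each of the integers k(n-1), k(n-1)+1, ..., kn is representable as a non-negative integer linear combination of X_n = (2n-2, 2n-1, 2n, 3n-3, 3n). -/
/-- `q` generators of weight two with total excess `j ≤ 2 * q`, together with `d` copies of
`3 * n - 3` and `e` copies of `3 * n`, written with `m = n - 1`. -/
theorem representable_of_excess (m q j d e : ℕ) (hj : j ≤ 2 * q) :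
    Representable (X (m + 1)) (2 * q * m + j + d * (3 * m) + e * (3 * m + 3)) := by
  -- `j / 2` copies of `2n`, `j % 2` copies of `2n - 1`, the remaining ones `2n - 2`
  obtain ⟨a, b, c, rfl, rfl⟩ : ∃ a b c, q = a + b + c ∧ j = b + 2 * c :=
    ⟨q - j % 2 - j / 2, j % 2, j / 2, by omega, by omega⟩
  refine ⟨(![a, b, c, d, e] : Fin 5 → ℕ), ?_⟩
  have e1 : 2 * (m + 1) - 2 = 2 * m := by omega
  have e2 : 2 * (m + 1) - 1 = 2 * m + 1 := by omega
  have e3 : 3 * (m + 1) - 3 = 3 * m := by omega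
  change ∑ i : Fin 5, (![a, b, c, d, e] : Fin 5 → ℕ) i * (X (m + 1)).get i = _
  rw [Fin.sum_univ_five]
  change a * (2 * (m + 1) - 2) + b * (2 * (m + 1) - 1) + c * (2 * (m + 1))
    + d * (3 * (m + 1) - 3) + e * (3 * (m + 1)) = _
  rw [e1, e2, e3]
  ring

/-- For every integer `n ≥ 4` and every integer `k` with `k = 2` or `k ≥ 4`,
each of the integers `k(n-1), k(n-1)+1, ..., kn` is representable as a
non-negative integer linear combination of `X_n = (2n-2, 2n-1, 2n, 3n-3, 3n)`. -/
theorem stmt5 (n k : ℕ) (hn : 4 ≤ n) (hk : k = 2 ∨ 4 ≤ k) (t : ℕ)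
    (h1 : k * (n - 1) ≤ t) (h2 : t ≤ k * n) : Representable (X n) t := by
  obtain ⟨m, rfl⟩ : ∃ m, n = m + 1 := ⟨n - 1, by omega⟩
  rw [Nat.add_sub_cancel] at h1
  obtain ⟨j, rfl⟩ := Nat.exists_eq_add_of_le h1
  have hj : j ≤ k := by
    rw [mul_add, mul_one] at h2
    omega
  rcases Nat.even_or_odd' k with ⟨q, rfl | rfl⟩
  · simpa using representable_of_excess m q j 0 0 hj
  · obtain ⟨p, rfl⟩ : ∃ p, q = p + 1 := ⟨q - 1, by omega⟩
    by_cases h3 : j ≤ 2 * p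
    · convert representable_of_excess m p j 1 0 h3 using 1
      ring
    · obtain ⟨i, rfl⟩ : ∃ i, j = i + 3 := ⟨j - 3, by omega⟩
      convert representable_of_excess m p i 0 1 (by omega) using 1
      ring
end

section
/- For every integer n ≥ 6, every integer t > n² - 3n + 1 is representable as a non-negative integer linear combination of X_n = (2n-2, 2n-1, 2n, 3n-3, 3n). -/
theorem representable_of_coeffs {m t : ℕ} (a b c d e : ℕ)
    (h : a * (2 * m) + b * (2 * m + 1) + c * (2 * m + 2) + d * (3 * m) + e * (3 * m + 3) = t) :
    Representable (X (m + 1)) t := by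
  refine ⟨![a, b, c, d, e], ?_⟩
  have h1 : 2 * (m + 1) - 2 = 2 * m := by omega
  have h2 : 2 * (m + 1) - 1 = 2 * m + 1 := by omega
  have h3 : 3 * (m + 1) - 3 = 3 * m := by omega
  change ∑ i : Fin 5, _ = t
  simp only [Fin.sum_univ_five]
  change a * (2 * (m + 1) - 2) + b * (2 * (m + 1) - 1) + c * (2 * (m + 1))
    + d * (3 * (m + 1) - 3) + e * (3 * (m + 1)) = t
  rw [h1, h2, h3, ← h]
  ring

/-- The weight 2 generators alone attain every excess `i ≤ 2 * s` with `s` summands. -/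
theorem exists_coeffs_weight_two {s i : ℕ} (h : i ≤ 2 * s) :
    ∃ a b c : ℕ, a + b + c = s ∧ b + 2 * c = i :=
  ⟨s - i % 2 - i / 2, i % 2, i / 2, by omega, by omega⟩

theorem representable_weight_excess {m k i : ℕ} (hk : 4 ≤ k) (hi : i ≤ k) :
    Representable (X (m + 1)) (k * m + i) := by
  rcases Nat.even_or_odd' k with ⟨s, rfl | rfl⟩
  · obtain ⟨a, b, c, rfl, rfl⟩ := exists_coeffs_weight_two hi
    exact representable_of_coeffs a b c 0 0 (by ring)
  -- For odd weight, exactly one summand has weight 3; it takes excess 3 when the others cannot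
  -- supply all of `i`, and then `i ≥ 3` because at least one other summand is present.
  · obtain ⟨s, rfl⟩ : ∃ r, s = r + 1 := ⟨s - 1, by omega⟩
    by_cases h : i ≤ 2 * s
    · obtain ⟨a, b, c, rfl, rfl⟩ := exists_coeffs_weight_two h
      exact representable_of_coeffs a b c 1 0 (by ring)
    · obtain ⟨j, rfl⟩ : ∃ j, i = j + 3 := ⟨i - 3, by omega⟩
      have h' : j ≤ 2 * s := by omega
      obtain ⟨a, b, c, rfl, rfl⟩ := exists_coeffs_weight_two h'
      exact representable_of_coeffs a b c 0 1 (by ring)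

/-- For every integer `n ≥ 6`, every integer `t > n^2 - 3n + 1` is representable
as a non-negative integer linear combination of
`X_n = (2n-2, 2n-1, 2n, 3n-3, 3n)`. -/
theorem stmt6 (n : ℕ) (hn : 6 ≤ n) (t : ℕ) (ht : n ^ 2 - 3 * n + 1 < t) :
    Representable (X n) t := by
  obtain ⟨m, rfl⟩ : ∃ m, n = m + 2 := ⟨n - 2, by omega⟩
  -- Here `m` is `n - 2`, so the weight unit is `m + 1` and the bound reads `m * (m + 1) ≤ t`.
  have hbound : m * (m + 1) ≤ t := by
    have h : (m + 2) ^ 2 = m * (m + 1) + 3 * m + 4 := by ring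
    omega
  have hk : m ≤ t / (m + 1) := (Nat.le_div_iff_mul_le (Nat.succ_pos m)).2 hbound
  have hi : t % (m + 1) < m + 1 := Nat.mod_lt _ (Nat.succ_pos m)
  have hrep := representable_weight_excess (m := m + 1) (k := t / (m + 1)) (i := t % (m + 1))
    (by omega) (by omega)
  rwa [Nat.div_add_mod'] at hrep
end

section
/- For every integer n ≥ 6, the integer n² - 3n + 1 is not representable as a non-negative integer linear combination of X_n = (2n-2, 2n-1, 2n, 3n-3, 3n). -/
/-- For every integer `n ≥ 6`, the integer `n^2 - 3n + 1` is not representable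
as a non-negative integer linear combination of
`X_n = (2n-2, 2n-1, 2n, 3n-3, 3n)`. -/
theorem stmt7 (n : ℕ) (hn : 6 ≤ n) :
    ¬ Representable (X n) (n ^ 2 - 3 * n + 1) := by
  rintro ⟨c, hc⟩
  -- `(X n).length` reduces to `5`, so the sum can be read over `Fin 5`.
  change Fin 5 → ℕ at c
  change ∑ i : Fin 5, c i * (X n).get i = _ at hc
  rw [Fin.sum_univ_five] at hc
  change c 0 * (2 * n - 2) + c 1 * (2 * n - 1) + c 2 * (2 * n) + c 3 * (3 * n - 3)
    + c 4 * (3 * n) = _ at hc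
  -- Substituting `n = m + 6` removes every truncated subtraction.
  obtain ⟨m, rfl⟩ := Nat.exists_eq_add_of_le' hn
  have e1 : 2 * (m + 6) - 2 = 2 * m + 10 := by omega
  have e2 : 2 * (m + 6) - 1 = 2 * m + 11 := by omega
  have e3 : 3 * (m + 6) - 3 = 3 * m + 15 := by omega
  have e4 : (m + 6) ^ 2 - 3 * (m + 6) + 1 = m ^ 2 + 9 * m + 19 := by
    have : (m + 6) ^ 2 = m ^ 2 + 9 * m + 18 + 3 * (m + 6) := by ring
    omega
  rw [e1, e2, e3, e4] at hc
  generalize c 0 = x₀ at hc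
  generalize c 1 = x₁ at hc
  generalize c 2 = x₂ at hc
  generalize c 3 = x₃ at hc
  generalize c 4 = x₄ at hc
  zify at hc
  -- In the notation `s`, `u` of the header, `k = s - n + 3` with `n = m + 6`.
  obtain ⟨k, hk⟩ : ∃ k : ℤ, k = 2 * (x₀ + x₁ + x₂) + 3 * (x₃ + x₄) - m - 3 := ⟨_, rfl⟩
  have hu : 2 * (x₀ : ℤ) + x₁ + 3 * x₃ + 1 = k * (m + 6) := by
    rw [hk]; linear_combination -hc
  have hk1 : 1 ≤ k := by
    by_contra! h
    nlinarith
  -- `u ≤ s` amounts to `(k - 1) * (n - 1) + 1 ≤ 0`.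
  nlinarith [mul_nonneg (sub_nonneg.2 hk1) (by positivity : (0 : ℤ) ≤ m + 5)]
end

section
/- For every integer n ≥ 5, the 5-tuple X_n = (2n-2, 2n-1, 2n, 3n-3, 3n) is reasonable: no element of X_n can be written as a non-negative integer linear combination of the other four elements. -/
theorem coeff_sum_le_one {n a b c d e : ℕ} (hn : 5 ≤ n)
    (h : a * (2*n-2) + b * (2*n-1) + c * (2*n) + d * (3*n-3) + e * (3*n) ≤ 3*n) :
    a + b + c + d + e ≤ 1 := by
  by_contra! hS
  have hb : b * (2*n-2) ≤ b * (2*n-1) := Nat.mul_le_mul_left b (by omega)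
  have hc : c * (2*n-2) ≤ c * (2*n) := Nat.mul_le_mul_left c (by omega)
  have hd : d * (2*n-2) ≤ d * (3*n-3) := Nat.mul_le_mul_left d (by omega)
  have he : e * (2*n-2) ≤ e * (3*n) := Nat.mul_le_mul_left e (by omega)
  have h2 : 2 * (2*n-2) ≤ (a + b + c + d + e) * (2*n-2) := Nat.mul_le_mul_right _ hS
  simp only [add_mul] at h2
  omega

/-- For every integer `n ≥ 5`, the 5-tuple `X_n = (2n-2, 2n-1, 2n, 3n-3, 3n)`
is reasonable: no element of `X_n` can be written as a non-negative integer
linear combination of the other four elements. -/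
theorem stmt8 (n : ℕ) (hn : 5 ≤ n) : Reasonable (X n) := by
  rintro i ⟨c, hi, h⟩
  have hle : (X n).get i ≤ 3*n := by
    change Fin 5 at i
    fin_cases i <;> simp [X] <;> omega
  have hsum : ∑ j, c j * (X n).get j = c (0 : Fin 5) * (2*n-2) + c (1 : Fin 5) * (2*n-1)
      + c (2 : Fin 5) * (2*n) + c (3 : Fin 5) * (3*n-3) + c (4 : Fin 5) * (3*n) :=
    Fin.sum_univ_five (fun j : Fin 5 => c j * (X n).get j)
  rw [hsum] at h
  have hS := coeff_sum_le_one hn (h.trans_le hle)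
  change Fin 5 → ℕ at c
  change Fin 5 at i
  generalize h0 : c 0 = c0 at *
  generalize h1 : c 1 = c1 at *
  generalize h2 : c 2 = c2 at *
  generalize h3 : c 3 = c3 at *
  generalize h4 : c 4 = c4 at *
  -- The coefficient vector is zero or a standard basis vector.
  have hcases : (c0 = 0 ∧ c1 = 0 ∧ c2 = 0 ∧ c3 = 0 ∧ c4 = 0) ∨
      (c0 = 1 ∧ c1 = 0 ∧ c2 = 0 ∧ c3 = 0 ∧ c4 = 0) ∨
      (c0 = 0 ∧ c1 = 1 ∧ c2 = 0 ∧ c3 = 0 ∧ c4 = 0) ∨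
      (c0 = 0 ∧ c1 = 0 ∧ c2 = 1 ∧ c3 = 0 ∧ c4 = 0) ∨
      (c0 = 0 ∧ c1 = 0 ∧ c2 = 0 ∧ c3 = 1 ∧ c4 = 0) ∨
      (c0 = 0 ∧ c1 = 0 ∧ c2 = 0 ∧ c3 = 0 ∧ c4 = 1) := by omega
  rcases hcases with hk | hk | hk | hk | hk | hk <;>
    obtain ⟨rfl, rfl, rfl, rfl, rfl⟩ := hk <;>
    fin_cases i <;> simp [X] at h hi <;> omega
end

section
/- Fix an integer k ≥ 1. For every M there exists N such that for all n ≥ N, the difference g_0(X_n) - g_k(X_n) exceeds M, where X_n = (2n-2, 2n-1, 2n, 3n-3, 3n); equivalently, for n > 6k+3 one has g_0(X_n) - g_k(X_n) = n² - (6k+6)n + 2, which tends to infinity with n. -/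
/-- The tuple `c` of coefficients has the pair `(d, e)`, i.e. it contributes `d` copies of `n - 1`
and `e` copies of `n`, where `2n-1 = (n-1) + n`. -/
def HasPair (c : Fin 5 → ℕ) (d e : ℕ) : Prop :=
  2 * c 0 + c 1 + 3 * c 3 = d ∧ c 1 + 2 * c 2 + 3 * c 4 = e

/-- At least `m` tuples of coefficients have the pair `(d, e)`. -/
def AtLeast (m d e : ℕ) : Prop :=
  ∃ s : Finset (Fin 5 → ℕ), m ≤ s.card ∧ ∀ c ∈ s, HasPair c d e

lemma sol_iff (n t : ℕ) (hn : 1 ≤ n) (c : Fin 5 → ℕ) :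
    (∑ i : Fin (X n).length, c i * (X n).get i = t) ↔
      (2 * c 0 + c 1 + 3 * c 3) * (n - 1) + (c 1 + 2 * c 2 + 3 * c 4) * n = t := by
  obtain ⟨m, rfl⟩ : ∃ m, n = m + 1 := ⟨n - 1, by omega⟩
  have h : (∑ i : Fin (X (m + 1)).length, c i * (X (m + 1)).get i) =
      c 0 * (2 * m) + c 1 * (2 * m + 1) + c 2 * (2 * m + 2) + c 3 * (3 * m) + c 4 * (3 * m + 3) := by
    change (∑ i : Fin 5, c i * (X (m + 1)).get i) = _
    rw [Fin.sum_univ_five]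
    rfl
  rw [h, Nat.add_sub_cancel]
  constructor <;> intro h <;> rw [← h] <;> ring

/-- The representations of `t` over `X_n`, as a set of coefficient tuples. -/
def solSet (n t : ℕ) : Set (Fin 5 → ℕ) :=
  {c | (2 * c 0 + c 1 + 3 * c 3) * (n - 1) + (c 1 + 2 * c 2 + 3 * c 4) * n = t}

lemma numRep_eq (n t : ℕ) (hn : 1 ≤ n) : numRep (X n) t = (solSet n t).ncard := by
  have h : solSet n t =
      {c : Fin 5 → ℕ | ∑ i : Fin (X n).length, c i * (X n).get i = t} := by
    ext c
    exact (sol_iff n t hn c).symm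
  rw [h]
  rfl

lemma solSet_finite (n t : ℕ) (hn : 2 ≤ n) : (solSet n t).Finite := by
  refine (Set.finite_Icc (0 : Fin 5 → ℕ) (fun _ => t)).subset ?_
  intro c hc
  refine ⟨fun _ => Nat.zero_le _, ?_⟩
  obtain ⟨m, rfl⟩ : ∃ m, n = m + 2 := ⟨n - 2, by omega⟩
  simp only [solSet, Set.mem_ofPred_eq] at hc
  have h1 : m + 2 - 1 = m + 1 := by omega
  rw [h1] at hc
  have hd : 2 * c 0 + c 1 + 3 * c 3 ≤ (2 * c 0 + c 1 + 3 * c 3) * (m + 1) :=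
    Nat.le_mul_of_pos_right _ (by omega)
  have he : c 1 + 2 * c 2 + 3 * c 4 ≤ (c 1 + 2 * c 2 + 3 * c 4) * (m + 2) :=
    Nat.le_mul_of_pos_right _ (by omega)
  intro i
  fin_cases i <;> simp <;> omega

lemma AtLeast.le_ncard {m d e n t : ℕ} (h : AtLeast m d e) (hn : 2 ≤ n)
    (ht : d * (n - 1) + e * n = t) : m ≤ (solSet n t).ncard := by
  obtain ⟨s, hs, hp⟩ := h
  refine hs.trans ?_
  rw [← Set.ncard_coe_finset]
  refine Set.ncard_le_ncard ?_ (solSet_finite n t hn)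
  intro c hc
  obtain ⟨h1, h2⟩ := hp c hc
  simp only [solSet, Set.mem_ofPred_eq, h1, h2, ht]

/-- Reversing the roles of `n - 1` and `n`. -/
lemma AtLeast.symm {m d e : ℕ} (h : AtLeast m d e) : AtLeast m e d := by
  obtain ⟨s, hs, hp⟩ := h
  refine ⟨s.image fun c => ![c 2, c 1, c 0, c 4, c 3], ?_, ?_⟩
  · rw [Finset.card_image_of_injective]
    · exact hs
    · intro a b hab
      have h0 := congrFun hab 0
      have h1 := congrFun hab 1
      have h2 := congrFun hab 2
      have h3 := congrFun hab 3
      have h4 := congrFun hab 4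
      simp at h0 h1 h2 h3 h4
      ext i
      fin_cases i <;> simp [*]
  · intro c hc
    obtain ⟨b, hb, rfl⟩ := Finset.mem_image.1 hc
    obtain ⟨h1, h2⟩ := hp b hb
    constructor <;> simp <;> omega

lemma hasPair_mk (a₀ a₁ a₂ a₃ a₄ d e : ℕ) (h₁ : 2 * a₀ + a₁ + 3 * a₃ = d)
    (h₂ : a₁ + 2 * a₂ + 3 * a₄ = e) : HasPair ![a₀, a₁, a₂, a₃, a₄] d e := by
  simpa [HasPair] using And.intro h₁ h₂

/-- `2` and `3` generate every natural number except `1`, with fewer than three copies of `2`. -/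
lemma exists_two_three (m : ℕ) (hm : m ≠ 1) : ∃ a b, a < 3 ∧ 2 * a + 3 * b = m := by
  have : m % 3 = 0 ∨ m % 3 = 1 ∨ m % 3 = 2 := by omega
  rcases this with h | h | h
  · exact ⟨0, m / 3, by omega, by omega⟩
  · exact ⟨2, (m - 4) / 3, by omega, by omega⟩
  · exact ⟨1, (m - 2) / 3, by omega, by omega⟩

/-- Adding `3` to `c₀` embeds the tuples for `(d, e)` into those for `(d+6, e)` and misses a
tuple with `c₀ < 3`. -/
lemma AtLeast.add_six_left {m d e : ℕ} (h : AtLeast m d e) : AtLeast (m + 1) (d + 6) e := by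
  obtain ⟨s, hs, hp⟩ := h
  obtain ⟨z, hz, hz0⟩ : ∃ z : Fin 5 → ℕ, HasPair z (d + 6) e ∧ z 0 < 3 := by
    by_cases he : e = 1
    · obtain ⟨a, b, ha, hab⟩ := exists_two_three (d + 5) (by omega)
      exact ⟨![a, 1, 0, b, 0], hasPair_mk _ _ _ _ _ _ _ (by omega) (by omega), by simpa using ha⟩
    · obtain ⟨a, b, ha, hab⟩ := exists_two_three (d + 6) (by omega)
      obtain ⟨a', b', -, hab'⟩ := exists_two_three e he
      exact ⟨![a, 0, a', b, b'], hasPair_mk _ _ _ _ _ _ _ (by omega) (by omega), by simpa using ha⟩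
  have hmem : z ∉ s.image (fun c => c + ![3, 0, 0, 0, 0]) := by
    intro hz'
    obtain ⟨b, -, rfl⟩ := Finset.mem_image.1 hz'
    simp at hz0
  refine ⟨insert z (s.image fun c => c + ![3, 0, 0, 0, 0]), ?_, ?_⟩
  · rw [Finset.card_insert_of_notMem hmem, Finset.card_image_of_injective _ (add_left_injective _)]
    omega
  · intro c hc
    rcases Finset.mem_insert.1 hc with rfl | hc
    · exact hz
    · obtain ⟨b, hb, rfl⟩ := Finset.mem_image.1 hc
      obtain ⟨h1, h2⟩ := hp b hb
      constructor <;> simp <;> omega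

lemma AtLeast.add_six_right {m d e : ℕ} (h : AtLeast m d e) : AtLeast (m + 1) d (e + 6) :=
  h.symm.add_six_left.symm

lemma HasPair.atLeast_one {c : Fin 5 → ℕ} {d e : ℕ} (h : HasPair c d e) : AtLeast 1 d e :=
  ⟨{c}, by simp, by simpa using h⟩

/-- The bound `4` is sharp: `(1, 2)` and `(2, 1)` are pairs of no tuple. -/
lemma atLeast_one_of_le (d e : ℕ) (h : 4 ≤ d + e) : AtLeast 1 d e := by
  by_cases hd : d = 1
  · obtain ⟨a, b, -, hab⟩ := exists_two_three (e - 1) (by omega)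
    exact (hasPair_mk 0 1 a 0 b d e (by omega) (by omega)).atLeast_one
  by_cases he : e = 1
  · obtain ⟨a, b, -, hab⟩ := exists_two_three (d - 1) (by omega)
    exact (hasPair_mk a 1 0 b 0 d e (by omega) (by omega)).atLeast_one
  obtain ⟨a, b, -, hab⟩ := exists_two_three d hd
  obtain ⟨a', b', -, hab'⟩ := exists_two_three e he
  exact (hasPair_mk a 0 a' b b' d e (by omega) (by omega)).atLeast_one

lemma atLeast_of_le (k d e : ℕ) (h : 6 * k + 4 ≤ d + e) : AtLeast (k + 1) d e := by
  induction k generalizing d e with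
  | zero => exact atLeast_one_of_le d e (by omega)
  | succ k ih =>
    by_cases hd : 6 ≤ d
    · obtain ⟨d, rfl⟩ := Nat.exists_eq_add_of_le' hd
      exact (ih d e (by omega)).add_six_left
    by_cases he : 6 ≤ e
    · obtain ⟨e, rfl⟩ := Nat.exists_eq_add_of_le' he
      exact (ih d e (by omega)).add_six_right
    -- The only pair from which neither coordinate can be lowered by 6.
    obtain ⟨rfl, rfl, rfl⟩ : d = 5 ∧ e = 5 ∧ k = 0 := by omega
    refine ⟨{![1, 0, 1, 1, 1], ![2, 1, 2, 0, 0]}, by decide, ?_⟩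
    intro c hc
    simp only [Finset.mem_insert, Finset.mem_singleton] at hc
    rcases hc with rfl | rfl <;> exact hasPair_mk _ _ _ _ _ _ _ rfl rfl

lemma atLeast_zero (k : ℕ) : AtLeast (k + 1) 0 (6 * k + 3) := by
  induction k with
  | zero => exact (hasPair_mk 0 0 0 0 1 0 3 rfl rfl).atLeast_one
  | succ k ih => exact ih.add_six_right

lemma isGreatest_zero (n : ℕ) (hn : 6 ≤ n) :
    IsGreatest {t : ℕ | numRep (X n) t = 0} (n * (n - 3) + 1) := by
  obtain ⟨m, rfl⟩ : ∃ m, n = m + 6 := ⟨n - 6, by omega⟩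
  have e3 : m + 6 - 3 = m + 3 := by omega
  have e1 : m + 6 - 1 = m + 5 := by omega
  constructor
  · simp only [Set.mem_ofPred_eq]
    rw [numRep_eq _ _ (by omega), Set.ncard_eq_zero (solSet_finite _ _ (by omega)),
      Set.eq_empty_iff_forall_notMem]
    intro c hc
    simp only [solSet, Set.mem_ofPred_eq, e3, e1] at hc
    generalize 2 * c 0 + c 1 + 3 * c 3 = d at hc
    generalize c 1 + 2 * c 2 + 3 * c 4 = e at hc
    -- Modulo `n` the equation says `d ≡ n - 1`, and `d ≥ n - 1` already makes the sum too large.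
    rcases le_or_gt (m + 4) (d + e) with h | h
    · obtain ⟨u, hu⟩ := Nat.exists_eq_add_of_le h
      have : d = u * (m + 6) + (m + 5) := by
        have : (d + e) * (m + 6) = (m + 6) * (m + 3) + 1 + d := by rw [← hc]; ring
        rw [hu] at this
        nlinarith
      nlinarith
    · have : (d + e) * (m + 6) ≤ (m + 3) * (m + 6) := Nat.mul_le_mul_right _ (by omega)
      nlinarith
  · intro t ht
    by_contra! hlt
    simp only [Set.mem_ofPred_eq] at ht
    rw [numRep_eq _ _ (by omega)] at ht
    rw [e3] at hlt
    -- `w` is `t / n` rounded up.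
    obtain ⟨w, d, hw, hd⟩ : ∃ w d, w * (m + 6) = t + d ∧ d ≤ m + 5 := by
      refine ⟨(t + (m + 5)) / (m + 6), m + 5 - (t + (m + 5)) % (m + 6), ?_, by omega⟩
      have h1 := Nat.div_add_mod (t + (m + 5)) (m + 6)
      have h2 := Nat.mod_lt (t + (m + 5)) (show 0 < m + 6 by omega)
      rw [mul_comm]
      omega
    have hw4 : m + 4 ≤ w := by
      by_contra! h
      have : w * (m + 6) ≤ (m + 3) * (m + 6) := Nat.mul_le_mul_right _ (by omega)
      nlinarith
    have hdw : d ≤ w := by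
      rcases Nat.eq_or_lt_of_le hw4 with h | h
      · subst h
        nlinarith
      · omega
    obtain ⟨e, rfl⟩ := Nat.exists_eq_add_of_le hdw
    have := (atLeast_one_of_le d e (by omega)).le_ncard (n := m + 6) (t := t) (by omega)
      (by rw [e1]; nlinarith)
    omega

/-- The representations of `(6k+3)n - 1`, listed by `c₄ = 2j + 1`. -/
lemma solSet_eq (k n : ℕ) (hn : 6 * k + 3 < n) :
    solSet n ((6 * k + 3) * n - 1) =
      (fun j : ℕ => (![0, 1, 3 * (k - j) - 1, 0, 2 * j + 1] : Fin 5 → ℕ)) '' Set.Iio k := by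
  obtain ⟨m, rfl⟩ : ∃ m, n = m + 1 := ⟨n - 1, by omega⟩
  have ht : (6 * k + 3) * (m + 1) - 1 = 1 * m + (6 * k + 2) * (m + 1) := by
    have : (6 * k + 3) * (m + 1) = 1 * m + (6 * k + 2) * (m + 1) + 1 := by ring
    omega
  ext c
  simp only [solSet, Set.mem_ofPred_eq, ht, Nat.add_sub_cancel, Set.mem_image, Set.mem_Iio]
  constructor
  · intro hc
    have key : ∀ d e : ℕ, d * m + e * (m + 1) = 1 * m + (6 * k + 2) * (m + 1) →
        d = 1 ∧ e = 6 * k + 2 := by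
      intro d e h
      have h' : (d + e) * (m + 1) + 1 = (6 * k + 3) * (m + 1) + d := by nlinarith
      rcases lt_trichotomy (d + e) (6 * k + 3) with hlt | heq | hgt
      · have : (d + e) * (m + 1) ≤ (6 * k + 2) * (m + 1) := Nat.mul_le_mul_right _ (by omega)
        nlinarith
      · rw [heq] at h'
        omega
      · obtain ⟨u, hu⟩ := Nat.exists_eq_add_of_lt hgt
        rw [hu] at h'
        have : d = (u + 1) * (m + 1) + 1 := by nlinarith
        nlinarith
    obtain ⟨h1, h2⟩ := key _ _ hc
    refine ⟨(c 4 - 1) / 2, by omega, ?_⟩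
    ext i
    fin_cases i <;> simp <;> omega
  · rintro ⟨j, hj, rfl⟩
    have h2 : 1 + 2 * (3 * (k - j) - 1) + 3 * (2 * j + 1) = 6 * k + 2 := by omega
    simp [h2]

lemma isGreatest_pos (k n : ℕ) (hk : 1 ≤ k) (hn : 6 * k + 3 < n) :
    IsGreatest {t : ℕ | numRep (X n) t = k} ((6 * k + 3) * n - 1) := by
  constructor
  · simp only [Set.mem_ofPred_eq]
    rw [numRep_eq _ _ (by omega), solSet_eq k n hn, Set.ncard_image_of_injective]
    · simp [Set.ncard_eq_toFinset_card']
    · intro a b hab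
      have := congrFun hab 4
      simpa using this
  · intro t ht
    by_contra! hlt
    simp only [Set.mem_ofPred_eq] at ht
    rw [numRep_eq _ _ (by omega)] at ht
    obtain ⟨c, hc⟩ : (solSet n t).Nonempty := Set.nonempty_of_ncard_ne_zero (by omega)
    obtain ⟨m, rfl⟩ : ∃ m, n = m + 1 := ⟨n - 1, by omega⟩
    simp only [solSet, Set.mem_ofPred_eq] at hc
    generalize 2 * c 0 + c 1 + 3 * c 3 = d at hc
    generalize c 1 + 2 * c 2 + 3 * c 4 = e at hc
    have hF : AtLeast (k + 1) d e := by
      rcases Nat.lt_or_ge (d + e) (6 * k + 4) with h | h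
      · have h1 : (d + e) * (m + 1) = t + d := by rw [← hc, Nat.add_sub_cancel]; ring
        have h2 : (d + e) * (m + 1) ≤ (6 * k + 3) * (m + 1) := Nat.mul_le_mul_right _ (by omega)
        obtain rfl : d = 0 := by omega
        have h3 : 6 * k + 3 ≤ 0 + e := by
          by_contra! h4
          have : (0 + e) * (m + 1) ≤ (6 * k + 2) * (m + 1) := Nat.mul_le_mul_right _ (by omega)
          have : (6 * k + 3) * (m + 1) = (6 * k + 2) * (m + 1) + (m + 1) := by ring
          omega
        obtain rfl : e = 6 * k + 3 := by omega
        exact atLeast_zero k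
      · exact atLeast_of_le k d e h
    have := hF.le_ncard (n := m + 1) (by omega) hc
    omega

/-- Fix an integer `k ≥ 1`.  For every `M` there exists `N` such that for all
`n ≥ N`, the difference `g₀(X_n) - g_k(X_n)` exceeds `M`, where
`X_n = (2n-2, 2n-1, 2n, 3n-3, 3n)`; equivalently, for `n > 6k+3` one has
`g₀(X_n) - g_k(X_n) = n² - (6k+6)n + 2`, which tends to infinity with `n`. -/
theorem stmt9 (k : ℕ) (hk : 1 ≤ k) :
    (∀ M : ℤ, ∃ N : ℕ, ∀ n : ℕ, N ≤ n →
      ∃ g0 gk : ℕ, IsGreatest {t : ℕ | numRep (X n) t = 0} g0 ∧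
        IsGreatest {t : ℕ | numRep (X n) t = k} gk ∧ M < (g0 : ℤ) - (gk : ℤ)) ∧
    (∀ n : ℕ, 6 * k + 3 < n →
      ∃ g0 gk : ℕ, IsGreatest {t : ℕ | numRep (X n) t = 0} g0 ∧
        IsGreatest {t : ℕ | numRep (X n) t = k} gk ∧
        (g0 : ℤ) - (gk : ℤ) = (n : ℤ) ^ 2 - (6 * k + 6) * n + 2) := by
  have main : ∀ n : ℕ, 6 * k + 3 < n →
      ∃ g0 gk : ℕ, IsGreatest {t : ℕ | numRep (X n) t = 0} g0 ∧
        IsGreatest {t : ℕ | numRep (X n) t = k} gk ∧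
        (g0 : ℤ) - (gk : ℤ) = (n : ℤ) ^ 2 - (6 * k + 6) * n + 2 := by
    intro n hn
    refine ⟨_, _, isGreatest_zero n (by omega), isGreatest_pos k n hk hn, ?_⟩
    have h1 : 1 ≤ (6 * k + 3) * n := Nat.mul_pos (by omega) (by omega)
    push_cast [Nat.cast_sub h1, Nat.cast_sub (show 3 ≤ n by omega)]
    ring
  refine ⟨fun M => ⟨6 * k + 7 + M.toNat, fun n hn => ?_⟩, main⟩
  obtain ⟨g0, gk, h0, hgk, hd⟩ := main n (by omega)
  refine ⟨g0, gk, h0, hgk, ?_⟩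
  rw [hd]
  have h1 : (M : ℤ) ≤ (n : ℤ) - (6 * k + 6) := by omega
  have h2 : (0 : ℤ) ≤ (n : ℤ) - (6 * k + 6) := by omega
  have h3 : (1 : ℤ) ≤ n := by omega
  nlinarith
end

section
/- For every integer n ≥ 6, the n-tuple Y_n consisting of n+1, n+4, n+5, all integers from n+7 to 2n+1, and 2n+3, 2n+4 is reasonable: no element of Y_n can be written as a non-negative integer linear combination of the other elements. -/
/-- Besides distinctness, the only features of the entries of `Y n` that the argument uses. -/
lemma mem_Y_bounds {n x : ℕ} (hn : 6 ≤ n) (hx : x ∈ Y n) :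
    (x = n + 1 ∨ n + 4 ≤ x) ∧ x ≤ 2 * n + 4 ∧ x ≠ 2 * n + 2 := by
  simp only [Y, List.mem_append, List.mem_cons, List.not_mem_nil, or_false,
    List.mem_range'_1] at hx
  omega

lemma Y_nodup {n : ℕ} (hn : 6 ≤ n) : (Y n).Nodup := by
  simp only [Y, List.nodup_append, List.nodup_cons, List.mem_append,
    List.mem_cons, List.not_mem_nil, or_false, List.mem_range'_1]
  refine ⟨⟨by simp, List.nodup_range', ?_⟩, by simp, ?_⟩ <;> intros <;> omega

/-- A nonzero combination splits as one entry, of nonzero coefficient, plus a combination. -/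
lemma exists_split {m : ℕ} (x c : Fin m → ℕ) (h : ∑ j, c j * x j ≠ 0) :
    ∃ k, c k ≠ 0 ∧ ∃ d : Fin m → ℕ, ∑ j, c j * x j = x k + ∑ j, d j * x j := by
  obtain ⟨k, -, hk⟩ := Finset.exists_ne_zero_of_sum_ne_zero h
  have hc : c k ≠ 0 := left_ne_zero_of_mul hk
  refine ⟨k, hc, Function.update c k (c k - 1), ?_⟩
  rw [← Finset.add_sum_erase _ _ (Finset.mem_univ k),
    ← Finset.add_sum_erase _ (fun j => Function.update c k (c k - 1) j * x j)
      (Finset.mem_univ k), ← add_assoc]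
  congr 1
  · obtain ⟨a, ha⟩ := Nat.exists_eq_succ_of_ne_zero hc
    simp [ha, Nat.succ_mul, add_comm]
  · refine Finset.sum_congr rfl fun j hj => ?_
    rw [Function.update_of_ne (Finset.ne_of_mem_erase hj)]

/-- For every integer `n ≥ 6`, the n-tuple
`Y_n = (n+1, n+4, n+5, n+7, n+8, ..., 2n+1, 2n+3, 2n+4)` is reasonable: no
element of `Y_n` can be written as a non-negative integer linear combination of
the other elements. -/
theorem stmt10 (n : ℕ) (hn : 6 ≤ n) :
    (Y n).length = n ∧ Reasonable (Y n) := by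
  refine ⟨by simp [Y]; omega, ?_⟩
  rintro i ⟨c, hci, hc⟩
  have bounds (k : Fin (Y n).length) := mem_Y_bounds hn (List.get_mem (Y n) k)
  have hi := bounds i
  obtain ⟨j, hj, d, hd⟩ := exists_split (Y n).get c (by omega)
  have hbj := bounds j
  by_cases hd0 : ∑ k, d k * (Y n).get k = 0
  · -- One summand: distinctness of the entries forces `j = i`, but `c i = 0`.
    have hji : j = i := (Y_nodup hn).injective_get (by omega)
    exact hj (hji ▸ hci)
  · obtain ⟨k, -, e, he⟩ := exists_split (Y n).get d hd0
    have hbk := bounds k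
    by_cases he0 : ∑ l, e l * (Y n).get l = 0
    · omega
    · obtain ⟨l, -, f, hf⟩ := exists_split (Y n).get e he0
      have hbl := bounds l
      omega
end

section
/- For every integer n ≥ 6, the Frobenius number of the n-tuple Y_n = (n+1, n+4, n+5, n+7, ..., 2n+1, 2n+3, 2n+4) equals 2n+7; that is, 2n+7 is not representable as a non-negative integer linear combination of Y_n, and every integer t > 2n+7 is representable. -/
lemma mem_Y {n : ℕ} (hn : 6 ≤ n) (a : ℕ) :
    a ∈ Y n ↔ a = n + 1 ∨ a = n + 4 ∨ a = n + 5 ∨ (n + 7 ≤ a ∧ a ≤ 2 * n + 1) ∨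
      a = 2 * n + 3 ∨ a = 2 * n + 4 := by
  simp only [Y, List.mem_append, List.mem_cons, List.not_mem_nil, or_false, List.mem_range'_1]
  omega

lemma Representable.of_mem {x : List ℕ} {a : ℕ} (ha : a ∈ x) : Representable x a := by
  obtain ⟨i, rfl⟩ := List.mem_iff_get.mp ha
  exact ⟨Pi.single i 1, by simp [Pi.single_apply]⟩

lemma Representable.add {x : List ℕ} {s t : ℕ} (hs : Representable x s)
    (ht : Representable x t) : Representable x (s + t) := by
  obtain ⟨c, rfl⟩ := hs
  obtain ⟨d, rfl⟩ := ht
  exact ⟨c + d, by simp [add_mul, Finset.sum_add_distrib]⟩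

lemma Representable.mem_of_subset {x : List ℕ} {t : ℕ} (ht : Representable x t)
    (M : AddSubmonoid ℕ) (hM : ∀ a ∈ x, a ∈ M) : t ∈ M := by
  obtain ⟨c, rfl⟩ := ht
  refine sum_mem fun i _ => ?_
  rw [← smul_eq_mul]
  exact nsmul_mem (hM _ (List.get_mem x i)) _

/-- The submonoid `{0, n+1, n+4, n+5} ∪ {t ≥ n+7 | t ≠ 2n+7}`, which contains all the
generators `Y n` but omits `2n+7`. It is closed under addition because no two elements sum
to `2n+7` and, `n` being at least `6`, any two nonzero elements sum to at least `n+7`. -/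
def avoidingSubmonoid (n : ℕ) (hn : 6 ≤ n) : AddSubmonoid ℕ where
  carrier := {t | t = 0 ∨ t = n + 1 ∨ t = n + 4 ∨ t = n + 5 ∨ (n + 7 ≤ t ∧ t ≠ 2 * n + 7)}
  zero_mem' := Or.inl rfl
  add_mem' := by
    intro a b ha hb
    simp only [Set.mem_ofPred_eq] at *
    omega

lemma mem_avoidingSubmonoid {n t : ℕ} (hn : 6 ≤ n) : t ∈ avoidingSubmonoid n hn ↔
    t = 0 ∨ t = n + 1 ∨ t = n + 4 ∨ t = n + 5 ∨ (n + 7 ≤ t ∧ t ≠ 2 * n + 7) :=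
  Iff.rfl

/-- Each of the `n+1` consecutive integers `2n+8, ..., 3n+8` is a sum of two generators. -/
lemma exists_add_of_window {n t : ℕ} (hn : 6 ≤ n) (h₁ : 2 * n + 8 ≤ t) (h₂ : t ≤ 3 * n + 8) :
    ∃ a ∈ Y n, ∃ b ∈ Y n, a + b = t := by
  simp only [mem_Y hn]
  have hcases : t = 2 * n + 8 ∨ t = 2 * n + 10 ∨ t = 3 * n + 6 ∨
      (t ≠ 2 * n + 8 ∧ t ≠ 2 * n + 10 ∧ t ≠ 3 * n + 6) := by omega
  rcases hcases with h | h | h | h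
  · exact ⟨n + 1, by omega, n + 7, by omega, by omega⟩
  · exact ⟨n + 5, by omega, n + 5, by omega, by omega⟩
  · exact ⟨n + 5, by omega, 2 * n + 1, by omega, by omega⟩
  -- The remaining offsets `9, 11, ..., n+5, n+7, n+8` are `4` plus another offset.
  · exact ⟨n + 4, by omega, t - (n + 4), by omega, by omega⟩

/-- For every integer `n ≥ 6`, the Frobenius number of the n-tuple
`Y_n = (n+1, n+4, n+5, n+7, ..., 2n+1, 2n+3, 2n+4)` equals `2n+7`. -/
theorem stmt11 (n : ℕ) (hn : 6 ≤ n) :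
    ¬ Representable (Y n) (2 * n + 7) ∧
      ∀ t : ℕ, 2 * n + 7 < t → Representable (Y n) t := by
  refine ⟨fun h => ?_, fun t => ?_⟩
  · have hmem := h.mem_of_subset (avoidingSubmonoid n hn) fun a ha => by
      rw [mem_Y hn] at ha
      rw [mem_avoidingSubmonoid]
      omega
    rw [mem_avoidingSubmonoid] at hmem
    omega
  · induction t using Nat.strong_induction_on with
    | _ t ih =>
      intro ht
      by_cases hle : t ≤ 3 * n + 8
      · obtain ⟨a, ha, b, hb, rfl⟩ := exists_add_of_window hn ht hle
        exact (Representable.of_mem ha).add (Representable.of_mem hb)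
      · have hgen : Representable (Y n) (n + 1) := .of_mem ((mem_Y hn _).2 (Or.inl rfl))
        have hsum := (ih (t - (n + 1)) (by omega) (by omega)).add hgen
        rwa [Nat.sub_add_cancel (by omega)] at hsum
end

section
/- For every integer n ≥ 6, with Y_n = (n+1, n+4, n+5, n+7, ..., 2n+1, 2n+3, 2n+4), the largest integer having exactly one representation as a non-negative integer linear combination of Y_n is 2n+6; that is, R_{Y_n}(2n+6) = 1 and every integer t > 2n+6 satisfies R_{Y_n}(t) ≠ 1. -/
/-- The coefficient vector given by the multiplicities in a multiset `s` of entries of `x` represents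
the sum of `s`. -/
lemma sum_count_mul_get {x : List ℕ} (hx : x.Nodup) (s : Multiset ℕ) (hs : ∀ a ∈ s, a ∈ x) :
    ∑ i : Fin x.length, s.count (x.get i) * x.get i = s.sum := by
  induction s using Multiset.induction with
  | empty => simp
  | cons a s ih =>
    obtain ⟨j, rfl⟩ := List.mem_iff_get.1 (hs a (Multiset.mem_cons_self a s))
    have hs' := ih fun b hb => hs b (Multiset.mem_cons_of_mem hb)
    have hinj : ∀ i, x.get i = x.get j ↔ i = j := fun i => hx.injective_get.eq_iff
    simp only [Multiset.count_cons, add_mul, Finset.sum_add_distrib, hs', Multiset.sum_cons, hinj]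
    simp [add_comm]

/-- Every coefficient vector comes from a multiset of entries. -/
lemma exists_multiset {x : List ℕ} (hx : x.Nodup) (c : Fin x.length → ℕ) :
    ∃ s : Multiset ℕ, (∀ a ∈ s, a ∈ x) ∧ s.sum = ∑ i, c i * x.get i ∧
      ∀ i, s.count (x.get i) = c i := by
  have hinj : ∀ i j, x.get i = x.get j ↔ i = j := fun i j => hx.injective_get.eq_iff
  refine ⟨∑ i, Multiset.replicate (c i) (x.get i), ?_, ?_, ?_⟩
  · intro a ha
    obtain ⟨i, -, hi⟩ := Multiset.mem_sum.1 ha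
    rw [Multiset.eq_of_mem_replicate hi]
    exact List.get_mem x i
  · simp [Multiset.sum_sum]
  · intro i
    simp only [Multiset.count_sum', Multiset.count_replicate, hinj]
    simp

lemma nodup_Y (n : ℕ) (hn : 6 ≤ n) : (Y n).Nodup := by
  have h : (List.range' (n + 7) (n - 5)).Nodup := List.nodup_range'
  simp only [Y, List.nodup_append, List.nodup_cons, List.mem_append, List.mem_cons,
    List.mem_range'_1, List.not_mem_nil, List.nodup_nil, or_false, h]
  refine ⟨⟨by simp, trivial, ?_⟩, by simp, ?_⟩ <;>
  · intro a ha b hb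
    omega

/-- A multiset of entries of `Y n` with sum less than `3 (n + 1)` has at most two elements. -/
lemma small_multiset {n : ℕ} (hn : 6 ≤ n) (s : Multiset ℕ) (hs : ∀ a ∈ s, a ∈ Y n)
    (hlt : s.sum < 3 * (n + 1)) :
    s = 0 ∨ (∃ a ∈ Y n, s = {a}) ∨ ∃ a ∈ Y n, ∃ b ∈ Y n, s = {a, b} := by
  have h1 : s.card • (n + 1) ≤ s.sum := by
    apply Multiset.card_nsmul_le_sum
    intro a ha
    have := (mem_Y hn a).1 (hs a ha)
    omega
  have h2 : s.card < 3 := by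
    rw [smul_eq_mul] at h1
    exact lt_of_mul_lt_mul_right (h1.trans_lt hlt) (Nat.zero_le _)
  have h3 : s.card = 0 ∨ s.card = 1 ∨ s.card = 2 := by omega
  rcases h3 with h | h | h
  · exact Or.inl (Multiset.card_eq_zero.1 h)
  · obtain ⟨a, rfl⟩ := Multiset.card_eq_one.1 h
    exact Or.inr (Or.inl ⟨a, hs a (by simp), rfl⟩)
  · obtain ⟨a, b, rfl⟩ := Multiset.card_eq_two.1 h
    exact Or.inr (Or.inr ⟨a, hs a (by simp), b, hs b (by simp), rfl⟩)

/-- Every `t ≥ 2n + 8` has two representations, told apart by an entry `a ≠ n + 1`. -/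
lemma two_representations {n : ℕ} (hn : 6 ≤ n) (t : ℕ) (ht : 2 * n + 8 ≤ t) :
    ∃ s₁ s₂ : Multiset ℕ, (∀ a ∈ s₁, a ∈ Y n) ∧ (∀ a ∈ s₂, a ∈ Y n) ∧ s₁.sum = t ∧ s₂.sum = t ∧
      ∃ a ∈ s₁, a ∉ s₂ ∧ a ≠ n + 1 := by
  induction t using Nat.strong_induction_on with
  | _ t ih =>
  have hn1 : n + 1 ∈ Y n := (mem_Y hn _).2 (by omega)
  by_cases hbig : 3 * n + 9 ≤ t
  · obtain ⟨s₁, s₂, h₁, h₂, e₁, e₂, a, ha₁, ha₂, ha⟩ := ih (t - (n + 1)) (by omega) (by omega)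
    refine ⟨(n + 1) ::ₘ s₁, (n + 1) ::ₘ s₂, ?_, ?_, ?_, ?_, a, ?_, ?_, ha⟩
    · simpa [hn1] using h₁
    · simpa [hn1] using h₂
    · rw [Multiset.sum_cons, e₁]; omega
    · rw [Multiset.sum_cons, e₂]; omega
    · simp [ha₁]
    · simp [ha₂, ha]
  -- Two representations by pairs of entries.
  have pair : ∀ p q u v : ℕ, p ∈ Y n → q ∈ Y n → u ∈ Y n → v ∈ Y n → p + q = t → u + v = t →
      p ≠ n + 1 → p ≠ u → p ≠ v → ∃ s₁ s₂ : Multiset ℕ, (∀ a ∈ s₁, a ∈ Y n) ∧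
        (∀ a ∈ s₂, a ∈ Y n) ∧ s₁.sum = t ∧ s₂.sum = t ∧ ∃ a ∈ s₁, a ∉ s₂ ∧ a ≠ n + 1 := by
    intro p q u v hp hq hu hv e₁ e₂ hpm hpu hpv
    exact ⟨{p, q}, {u, v}, by simp [hp, hq], by simp [hu, hv], by simpa using e₁,
      by simpa using e₂, p, by simp, by simp [hpu, hpv], hpm⟩
  -- A representation by a pair and one of the form `(n + 1) + (n + 1) + v`.
  have triple : ∀ p q v : ℕ, p ∈ Y n → q ∈ Y n → v ∈ Y n → p + q = t → n + 1 + (n + 1 + v) = t →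
      p ≠ n + 1 → p ≠ v → ∃ s₁ s₂ : Multiset ℕ, (∀ a ∈ s₁, a ∈ Y n) ∧
        (∀ a ∈ s₂, a ∈ Y n) ∧ s₁.sum = t ∧ s₂.sum = t ∧ ∃ a ∈ s₁, a ∉ s₂ ∧ a ≠ n + 1 := by
    intro p q v hp hq hv e₁ e₂ hpm hpv
    exact ⟨{p, q}, {n + 1, n + 1, v}, by simp [hp, hq], by simp [hn1, hv], by simpa using e₁,
      by simpa using e₂, p, by simp, by simp [hpm, hpv], hpm⟩
  simp only [mem_Y hn] at pair triple ⊢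
  by_cases c1 : t = 3 * n + 8
  · apply pair (n + 4) (2 * n + 4) (n + 5) (2 * n + 3) <;> omega
  by_cases c2 : t = 3 * n + 7
  · apply triple (2 * n + 3) (n + 4) (n + 5) <;> omega
  by_cases c3 : t = 3 * n + 6
  · apply triple (n + 5) (2 * n + 1) (n + 4) <;> omega
  by_cases c4 : t = 2 * n + 10
  -- Here `t = 2 (n + 5)`; `t - (n + 1) = n + 9` is an entry unless `n = 7`, when `t = 3 (n + 1)`.
  · by_cases h7 : n = 7
    · apply triple (n + 5) (n + 5) (n + 1) <;> omega
    · apply pair (n + 5) (n + 5) (n + 1) (n + 9) <;> omega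
  by_cases c5 : t = 3 * n + 3
  · apply triple (n + 4) (2 * n - 1) (n + 1) <;> omega
  apply pair (n + 4) (t - (n + 4)) (n + 1) (t - (n + 1)) <;> omega

/-- For every integer `n ≥ 6`, the largest integer having exactly one
representation as a non-negative integer linear combination of
`Y_n = (n+1, n+4, n+5, n+7, ..., 2n+1, 2n+3, 2n+4)` is `2n+6`. -/
theorem stmt12 (n : ℕ) (hn : 6 ≤ n) :
    numRep (Y n) (2 * n + 6) = 1 ∧
      ∀ t : ℕ, 2 * n + 6 < t → numRep (Y n) t ≠ 1 := by
  have hY := nodup_Y n hn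
  refine ⟨?_, fun t ht h => ?_⟩
  · have hmem : ∀ a ∈ ({n + 1, n + 5} : Multiset ℕ), a ∈ Y n := by
      simp [mem_Y hn]
    have hsum := sum_count_mul_get hY _ hmem
    refine Nat.card_eq_one_iff_exists.2 ⟨⟨_, hsum.trans (by simp; omega)⟩, ?_⟩
    rintro ⟨c, hc⟩
    obtain ⟨s, hs, hs', hcount⟩ := exists_multiset hY c
    rw [hc] at hs'
    have key : s = {n + 1, n + 5} := by
      rcases small_multiset hn s hs (by omega) with rfl | ⟨a, ha, rfl⟩ | ⟨a, ha, b, hb, rfl⟩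
      · simp at hs'
      · rw [mem_Y hn] at ha
        simp at hs'
        omega
      · rw [mem_Y hn] at ha hb
        simp at hs'
        have : (a = n + 1 ∧ b = n + 5) ∨ (a = n + 5 ∧ b = n + 1) := by omega
        rcases this with ⟨rfl, rfl⟩ | ⟨rfl, rfl⟩
        · rfl
        · exact Multiset.pair_comm _ _
    subst key
    exact Subtype.ext (funext fun i => (hcount i).symm)
  · obtain ⟨⟨c, hc⟩, huniq⟩ := Nat.card_eq_one_iff_exists.1 h
    by_cases h7 : t = 2 * n + 7
    · obtain ⟨s, hs, hs', -⟩ := exists_multiset hY c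
      rw [hc] at hs'
      rcases small_multiset hn s hs (by omega) with rfl | ⟨a, ha, rfl⟩ | ⟨a, ha, b, hb, rfl⟩
      · simp at hs'
        omega
      · rw [mem_Y hn] at ha
        simp at hs'
        omega
      · rw [mem_Y hn] at ha hb
        simp at hs'
        omega
    · obtain ⟨s₁, s₂, h₁, h₂, e₁, e₂, a, ha₁, ha₂, -⟩ := two_representations hn t (by omega)
      have heq := (huniq ⟨_, (sum_count_mul_get hY s₁ h₁).trans e₁⟩).trans
        (huniq ⟨_, (sum_count_mul_get hY s₂ h₂).trans e₂⟩).symm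
      obtain ⟨i, rfl⟩ := List.mem_iff_get.1 (h₁ a ha₁)
      have hi := congrFun (congrArg Subtype.val heq) i
      simp only [Multiset.count_eq_zero_of_notMem ha₂] at hi
      exact Multiset.count_ne_zero.2 ha₁ hi
end

section
/- For every integer i ≥ 4 there exists a reasonable i-tuple X of positive integers with gcd 1 such that g_0(X) > g_1(X), i.e., the largest integer with no representation as a non-negative integer linear combination of X exceeds the largest integer with exactly one such representation. (In other words, f(i) = 0 for all i ≥ 4.) -/
/-! ### Representations as multisets -/

/-- The multiset `s` is a representation of `t` over `x`: it consists of entries of `x`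
(with multiplicity the coefficient of the entry) and sums to `t`. -/
def IsRep (x : List ℕ) (t : ℕ) (s : Multiset ℕ) : Prop :=
  (∀ a ∈ s, a ∈ x) ∧ s.sum = t

lemma sum_count_mul {x : List ℕ} (hx : x.Nodup) {t : ℕ} {s : Multiset ℕ} (hs : IsRep x t s) :
    ∑ i : Fin x.length, s.count (x.get i) * x.get i = t := by
  have hinj : Function.Injective x.get := List.nodup_iff_injective_get.1 hx
  have himg : s.toFinset ⊆ Finset.univ.image x.get := by
    intro a ha
    obtain ⟨i, hi⟩ := List.get_of_mem (hs.1 a (Multiset.mem_toFinset.1 ha))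
    exact Finset.mem_image.2 ⟨i, Finset.mem_univ _, hi⟩
  rw [← hs.2, ← Finset.sum_image (f := fun a => s.count a * a) (fun i _ j _ h => hinj h),
    Finset.sum_multiset_count_of_subset s _ himg]
  simp

/-- A coefficient vector gives a multiset that uses only entries with nonzero coefficient. -/
lemma exists_isRep {x : List ℕ} {t : ℕ} (c : Fin x.length → ℕ)
    (hc : ∑ i, c i * x.get i = t) :
    ∃ s, IsRep x t s ∧ ∀ a ∈ s, ∃ i, c i ≠ 0 ∧ x.get i = a := by
  have key : ∀ a ∈ ∑ i, c i • ({x.get i} : Multiset ℕ), ∃ i, c i ≠ 0 ∧ x.get i = a := by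
    intro a ha
    obtain ⟨i, -, hi⟩ := Multiset.mem_sum.1 ha
    have h0 : c i ≠ 0 := by
      intro h
      simp [h] at hi
    exact ⟨i, h0, (Multiset.mem_singleton.1 (Multiset.mem_of_mem_nsmul hi)).symm⟩
  refine ⟨_, ⟨?_, ?_⟩, key⟩
  · intro a ha
    obtain ⟨i, -, rfl⟩ := key a ha
    exact List.get_mem x i
  · rw [← hc, Multiset.sum_sum]
    exact Finset.sum_congr rfl fun i _ => by
      rw [Multiset.sum_nsmul, Multiset.sum_singleton, smul_eq_mul]

lemma finite_reps_s14 {x : List ℕ} (hpos : ∀ a ∈ x, 0 < a) (t : ℕ) :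
    Finite {c : Fin x.length → ℕ // ∑ i, c i * x.get i = t} := by
  have hfin : (Set.Iic (fun _ : Fin x.length => t)).Finite := Set.finite_Iic _
  refine (hfin.subset ?_).to_subtype
  intro c hc i
  calc c i ≤ c i * x.get i := Nat.le_mul_of_pos_right _ (hpos _ (List.get_mem x i))
    _ ≤ ∑ i, c i * x.get i :=
        Finset.single_le_sum (f := fun i => c i * x.get i) (fun _ _ => Nat.zero_le _)
          (Finset.mem_univ i)
    _ = t := hc

lemma one_lt_numRep {x : List ℕ} (hpos : ∀ a ∈ x, 0 < a) (hx : x.Nodup) {t : ℕ}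
    (h : ∃ s₁ s₂, s₁ ≠ s₂ ∧ IsRep x t s₁ ∧ IsRep x t s₂) : 1 < numRep x t := by
  obtain ⟨s₁, s₂, hne, h₁, h₂⟩ := h
  have := finite_reps_s14 hpos t
  refine Finite.one_lt_card_iff_nontrivial.2
    ⟨⟨_, sum_count_mul hx h₁⟩, ⟨_, sum_count_mul hx h₂⟩, fun heq => hne ?_⟩
  ext a
  by_cases ha : a ∈ x
  · obtain ⟨i, rfl⟩ := List.get_of_mem ha
    exact congrFun (Subtype.ext_iff.1 heq) i
  · rw [Multiset.count_eq_zero_of_notMem fun h => ha (h₁.1 a h),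
      Multiset.count_eq_zero_of_notMem fun h => ha (h₂.1 a h)]

lemma numRep_zero {x : List ℕ} (hpos : ∀ a ∈ x, 0 < a) : numRep x 0 = 1 := by
  refine Nat.card_eq_one_iff_exists.2 ⟨⟨0, by simp⟩, fun c => Subtype.ext (funext fun i => ?_)⟩
  have h := Finset.sum_eq_zero_iff.1 c.2 i (Finset.mem_univ i)
  exact (Nat.mul_eq_zero.1 h).resolve_right (hpos _ (List.get_mem x i)).ne'

/-! ### The criterion for `g₁ < g₀` -/

/-- The criterion for `g₁ < g₀`: the number `G` has no representation and each of the `m`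
integers after it has two, where `m` is an entry. Adding copies of `m` then gives two
representations of every integer above `G`, so `g₀ = G`; and `g₁` exists because `0` has
exactly one representation. -/
lemma exists_greatest {x : List ℕ} (hpos : ∀ a ∈ x, 0 < a) (hx : x.Nodup) {m G : ℕ}
    (hm : m ∈ x) (h0 : ∀ s, ¬ IsRep x G s)
    (h2 : ∀ t, G < t → t ≤ G + m → ∃ s₁ s₂, s₁ ≠ s₂ ∧ IsRep x t s₁ ∧ IsRep x t s₂) :
    ∃ g0 g1 : ℕ, IsGreatest {t : ℕ | numRep x t = 0} g0 ∧
        IsGreatest {t : ℕ | numRep x t = 1} g1 ∧ g1 < g0 := by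
  have hall : ∀ t, G < t → ∃ s₁ s₂, s₁ ≠ s₂ ∧ IsRep x t s₁ ∧ IsRep x t s₂ := by
    intro t
    induction t using Nat.strong_induction_on with
    | _ t ih =>
      intro ht
      by_cases hle : t ≤ G + m
      · exact h2 t ht hle
      · have := hpos m hm
        obtain ⟨s₁, s₂, hne, h₁, h₂⟩ := ih (t - m) (by omega) (by omega)
        refine ⟨m ::ₘ s₁, m ::ₘ s₂, by simpa using hne, ⟨?_, ?_⟩, ⟨?_, ?_⟩⟩
        · simpa [hm] using h₁.1
        · rw [Multiset.sum_cons, h₁.2]; omega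
        · simpa [hm] using h₂.1
        · rw [Multiset.sum_cons, h₂.2]; omega
  have hG : numRep x G = 0 := by
    have : IsEmpty {c : Fin x.length → ℕ // ∑ i, c i * x.get i = G} :=
      ⟨fun c => by
        obtain ⟨s, hs, -⟩ := exists_isRep c.1 c.2
        exact h0 s hs⟩
    exact Nat.card_of_isEmpty
  have hbd : ∀ t, numRep x t ≤ 1 → t ≤ G := fun t ht => by
    by_contra hlt
    exact absurd (one_lt_numRep hpos hx (hall t (by omega))) (by omega)
  have hfin : {t : ℕ | numRep x t = 1}.Finite :=
    (Set.finite_Iic G).subset fun t ht => hbd t (le_of_eq ht)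
  obtain ⟨g, hg⟩ := hfin.exists_maximal ⟨0, numRep_zero hpos⟩
  have hgG : g ≤ G := hbd g (le_of_eq hg.1)
  refine ⟨G, g, ⟨hG, fun t ht => hbd t (by simp_all)⟩, ⟨hg.1, fun t ht => ?_⟩, ?_⟩
  · by_contra hlt
    exact hlt (hg.2 ht (by omega))
  · refine lt_of_le_of_ne hgG fun h => ?_
    have h1 : numRep x g = 1 := hg.1
    rw [h] at h1
    omega

lemma reasonable_of {x : List ℕ} (hx : x.Nodup)
    (h : ∀ a ∈ x, ∀ s, IsRep x a s → a ∈ s) : Reasonable x := by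
  rintro i ⟨c, hci, hc⟩
  obtain ⟨s, hs, hsc⟩ := exists_isRep c hc
  obtain ⟨j, hj, hji⟩ := hsc _ (h _ (List.get_mem x i) s hs)
  exact hj (List.nodup_iff_injective_get.1 hx hji ▸ hci)

/-! ### The tuples of length at least six -/

/-- The tuple `m, m+3, m+4, m+6, …, 2m-1, 2m+1, 2m+2`. For `m = n + 1` it is the tuple `Y n`;
the offsets from `m` make the arithmetic simpler. -/
def Z (m : ℕ) : List ℕ :=
  [m, m + 3, m + 4] ++ List.range' (m + 6) (m - 6) ++ [2 * m + 1, 2 * m + 2]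

lemma mem_Z {m a : ℕ} (hm : 7 ≤ m) : a ∈ Z m ↔
    a = m ∨ a = m + 3 ∨ a = m + 4 ∨ (m + 6 ≤ a ∧ a < 2 * m) ∨ a = 2 * m + 1 ∨ a = 2 * m + 2 := by
  simp only [Z, List.mem_append, List.mem_cons, List.mem_range'_1, List.not_mem_nil, or_false]
  omega

lemma nodup_Z {m : ℕ} (hm : 7 ≤ m) : (Z m).Nodup := by
  simp [Z, List.nodup_append, List.nodup_range', List.mem_range'_1]
  refine ⟨by omega, by omega, by omega, fun a _ _ => by omega⟩

/-- Every entry of `Z m` is at least `m`, so a sum below `3 * m` has at most two terms. -/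
lemma isRep_Z_cases {m t : ℕ} (hm : 7 ≤ m) (ht : t < 3 * m) (ht0 : 0 < t) {s : Multiset ℕ}
    (hs : IsRep (Z m) t s) :
    s = {t} ∧ t ∈ Z m ∨ ∃ a ∈ Z m, ∃ b ∈ Z m, a + b = t := by
  obtain ⟨hmem, hsum⟩ := hs
  have hge : ∀ a ∈ Z m, m ≤ a := fun a ha => by rw [mem_Z hm] at ha; omega
  have hcard : s.card * m ≤ s.sum := by
    simpa using Multiset.card_nsmul_le_sum (s := s) (a := m) fun a ha => hge a (hmem a ha)
  have hlt : s.card < 3 := by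
    by_contra hcon
    have : 3 * m ≤ s.card * m := Nat.mul_le_mul_right _ (by omega)
    omega
  interval_cases hc : s.card
  · rw [Multiset.card_eq_zero] at hc
    subst hc
    simp at hsum
    omega
  · obtain ⟨a, rfl⟩ := Multiset.card_eq_one.1 hc
    simp at hsum hmem
    subst hsum
    exact Or.inl ⟨rfl, hmem⟩
  · obtain ⟨a, b, rfl⟩ := Multiset.card_eq_two.1 hc
    simp at hsum hmem
    exact Or.inr ⟨a, hmem.1, b, hmem.2, hsum⟩

lemma reasonable_Z {m : ℕ} (hm : 7 ≤ m) : Reasonable (Z m) := by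
  refine reasonable_of (nodup_Z hm) fun a ha s hs => ?_
  have ha' := (mem_Z hm).1 ha
  rcases isRep_Z_cases hm (by omega) (by omega) hs with ⟨rfl, -⟩ | ⟨b, hb, c, hc, hbc⟩
  · simp
  · rw [mem_Z hm] at hb hc
    omega

lemma isRep_pair {m t a b : ℕ} (ha : a ∈ Z m) (hb : b ∈ Z m) (h : a + b = t) :
    IsRep (Z m) t {a, b} := by
  simp [IsRep, ha, hb, h]

/-- Two decompositions of `t` into two entries are different representations when the term `a`
of the first is below both terms of the second. -/
lemma two_pairs {m t : ℕ} (a b c d : ℕ) (ha : a ∈ Z m) (hb : b ∈ Z m)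
    (hc : c ∈ Z m) (hd : d ∈ Z m) (hab : a + b = t) (hcd : c + d = t) (hac : a < c) (had : a < d) :
    ∃ s₁ s₂, s₁ ≠ s₂ ∧ IsRep (Z m) t s₁ ∧ IsRep (Z m) t s₂ := by
  refine ⟨{a, b}, {c, d}, fun h => ?_, isRep_pair ha hb hab, isRep_pair hc hd hcd⟩
  have : a ∈ ({c, d} : Multiset ℕ) := h ▸ by simp
  simp at this
  omega

lemma triple_and_pair {m t : ℕ} (a b c d e : ℕ) (ha : a ∈ Z m) (hb : b ∈ Z m)
    (hc : c ∈ Z m) (hd : d ∈ Z m) (he : e ∈ Z m) (habc : a + b + c = t) (hde : d + e = t) :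
    ∃ s₁ s₂, s₁ ≠ s₂ ∧ IsRep (Z m) t s₁ ∧ IsRep (Z m) t s₂ := by
  refine ⟨{a, b, c}, {d, e}, fun h => ?_, ?_, isRep_pair hd he hde⟩
  · simpa using congrArg Multiset.card h
  · simp [IsRep, ha, hb, hc]
    omega

lemma greatest_Z {m : ℕ} (hm : 7 ≤ m) :
    ∃ g0 g1 : ℕ, IsGreatest {t : ℕ | numRep (Z m) t = 0} g0 ∧
        IsGreatest {t : ℕ | numRep (Z m) t = 1} g1 ∧ g1 < g0 := by
  refine exists_greatest (m := m) (G := 2 * m + 5)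
    (fun a ha => by rw [mem_Z hm] at ha; omega) (nodup_Z hm) (by simp [Z]) (fun s hs => ?_) ?_
  · -- `5` is not a sum of two of the offsets `0, 3, 4, 6, …`.
    rcases isRep_Z_cases hm (by omega) (by omega) hs with ⟨-, h⟩ | ⟨b, hb, c, hc, hbc⟩
    · rw [mem_Z hm] at h
      omega
    · rw [mem_Z hm] at hb hc
      omega
  · intro t h1 h2
    have mem : ∀ a, (a = m ∨ a = m + 3 ∨ a = m + 4 ∨ (m + 6 ≤ a ∧ a < 2 * m) ∨ a = 2 * m + 1 ∨
        a = 2 * m + 2) → a ∈ Z m := fun a => (mem_Z hm).2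
    by_cases h5 : t = 3 * m + 5
    · apply two_pairs (m + 3) (2 * m + 2) (m + 4) (2 * m + 1) <;>
        first | (apply mem; omega) | omega
    by_cases h4 : t = 3 * m + 4
    · apply triple_and_pair m m (m + 4) (m + 3) (2 * m + 1) <;>
        first | (apply mem; omega) | omega
    by_cases h3 : t = 3 * m + 3
    · apply triple_and_pair m m (m + 3) (m + 4) (2 * m - 1) <;>
        first | (apply mem; omega) | omega
    by_cases h0 : t = 3 * m
    · -- The pair is offset `3` plus offset `m - 3`, unless `m - 3` is the missing offset `5`.
      by_cases h8 : t = 2 * m + 8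
      · apply triple_and_pair m m m (m + 4) (m + 4) <;>
          first | (apply mem; omega) | omega
      · apply triple_and_pair m m m (m + 3) (t - (m + 3)) <;>
          first | (apply mem; omega) | omega
    by_cases h8 : t = 2 * m + 8
    · apply two_pairs m (t - m) (m + 4) (m + 4) <;>
        first | (apply mem; omega) | omega
    · apply two_pairs m (t - m) (m + 3) (t - (m + 3)) <;>
        first | (apply mem; omega) | omega

lemma foldr_gcd_dvd {x : List ℕ} : ∀ a ∈ x, x.foldr Nat.gcd 0 ∣ a := by
  induction x with
  | nil => simp
  | cons b l ih =>
    intro a ha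
    rcases List.mem_cons.1 ha with rfl | h
    · exact Nat.gcd_dvd_left _ _
    · exact (Nat.gcd_dvd_right _ _).trans (ih a h)

lemma gcd_Z {m : ℕ} (hm : 7 ≤ m) : (Z m).foldr Nat.gcd 0 = 1 := by
  have h3 := foldr_gcd_dvd (x := Z m) (m + 3) ((mem_Z hm).2 (by omega))
  have h4 := foldr_gcd_dvd (x := Z m) (m + 4) ((mem_Z hm).2 (by omega))
  have h := Nat.dvd_sub h4 h3
  rwa [show m + 4 - (m + 3) = 1 by omega, Nat.dvd_one] at h

/-! ### Lengths four and five -/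

lemma case_four : ∃ x : List ℕ, x.length = 4 ∧ (∀ a ∈ x, 0 < a) ∧ x.Nodup ∧
      x.foldr Nat.gcd 0 = 1 ∧ Reasonable x ∧
      ∃ g0 g1 : ℕ, IsGreatest {t : ℕ | numRep x t = 0} g0 ∧
        IsGreatest {t : ℕ | numRep x t = 1} g1 ∧ g1 < g0 := by
  refine ⟨[10, 15, 32, 48], rfl, by decide, by decide, by decide, ?_,
    exists_greatest (m := 10) (G := 101) (by decide) (by decide) (by decide) ?_ ?_⟩
  · rintro i ⟨c, hci, hc⟩
    have hc' := (Fin.sum_univ_four (fun j : Fin 4 => c j * [10, 15, 32, 48].get j)).symm.trans hc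
    fin_cases i <;> simp at hci hc' <;> omega
  · intro s hs
    have hc := sum_count_mul (by decide) hs
    have hc' := (Fin.sum_univ_four
      (fun j : Fin 4 => s.count ([10, 15, 32, 48].get j) * [10, 15, 32, 48].get j)).symm.trans hc
    simp at hc'
    -- Fixing one coefficient leaves equations that `omega` decides.
    have h48 : s.count 48 = 0 ∨ s.count 48 = 1 ∨ s.count 48 = 2 := by omega
    omega
  · intro t h1 h2
    unfold IsRep
    interval_cases t
    · exact ⟨{10, 15, 15, 15, 15, 32}, {10, 10, 10, 10, 15, 15, 32}, by decide⟩
    · exact ⟨{10, 15, 15, 15, 48}, {10, 10, 10, 10, 15, 48}, by decide⟩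
    · exact ⟨{10, 15, 15, 32, 32}, {10, 10, 10, 10, 32, 32}, by decide⟩
    · exact ⟨{10, 15, 32, 48}, {15, 15, 15, 15, 15, 15, 15}, by decide⟩
    · exact ⟨{10, 48, 48}, {10, 32, 32, 32}, by decide⟩
    · exact ⟨{15, 15, 15, 15, 15, 32}, {10, 10, 10, 15, 15, 15, 32}, by decide⟩
    · exact ⟨{15, 15, 15, 15, 48}, {10, 10, 10, 15, 15, 48}, by decide⟩
    · exact ⟨{15, 15, 15, 32, 32}, {10, 10, 10, 15, 32, 32}, by decide⟩
    · exact ⟨{15, 15, 32, 48}, {10, 10, 10, 32, 48}, by decide⟩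
    · exact ⟨{15, 48, 48}, {15, 32, 32, 32}, by decide⟩

lemma case_five : ∃ x : List ℕ, x.length = 5 ∧ (∀ a ∈ x, 0 < a) ∧ x.Nodup ∧
      x.foldr Nat.gcd 0 = 1 ∧ Reasonable x ∧
      ∃ g0 g1 : ℕ, IsGreatest {t : ℕ | numRep x t = 0} g0 ∧
        IsGreatest {t : ℕ | numRep x t = 1} g1 ∧ g1 < g0 := by
  refine ⟨[8, 9, 11, 14, 15], rfl, by decide, by decide, by decide, ?_,
    exists_greatest (m := 8) (G := 21) (by decide) (by decide) (by decide) ?_ ?_⟩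
  · rintro i ⟨c, hci, hc⟩
    have hc' := (Fin.sum_univ_five
      (fun j : Fin 5 => c j * [8, 9, 11, 14, 15].get j)).symm.trans hc
    -- Fixing three coefficients leaves equations in two unknowns, which `omega` decides.
    have small : (c 2 = 0 ∨ c 2 = 1) ∧ (c 3 = 0 ∨ c 3 = 1) ∧ (c 4 = 0 ∨ c 4 = 1) := by
      fin_cases i <;> simp at hci hc' <;> omega
    fin_cases i <;> simp at hci hc' <;> omega
  · intro s hs
    have hc := sum_count_mul (by decide) hs
    have hc' := (Fin.sum_univ_five (fun j : Fin 5 =>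
      s.count ([8, 9, 11, 14, 15].get j) * [8, 9, 11, 14, 15].get j)).symm.trans hc
    simp at hc'
    have h11 : s.count 11 = 0 ∨ s.count 11 = 1 := by omega
    have h14 : s.count 14 = 0 ∨ s.count 14 = 1 := by omega
    have h15 : s.count 15 = 0 ∨ s.count 15 = 1 := by omega
    omega
  · intro t h1 h2
    unfold IsRep
    interval_cases t
    · exact ⟨{8, 14}, {11, 11}, by decide⟩
    · exact ⟨{8, 15}, {9, 14}, by decide⟩
    · exact ⟨{9, 15}, {8, 8, 8}, by decide⟩
    · exact ⟨{11, 14}, {8, 8, 9}, by decide⟩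
    · exact ⟨{11, 15}, {8, 9, 9}, by decide⟩
    · exact ⟨{8, 8, 11}, {9, 9, 9}, by decide⟩
    · exact ⟨{14, 14}, {8, 9, 11}, by decide⟩
    · exact ⟨{14, 15}, {9, 9, 11}, by decide⟩

/-- For every integer `i ≥ 4` there exists a reasonable i-tuple `x` of distinct
positive integers with gcd 1 such that `g₀(x) > g₁(x)`: the largest integer
with no representation as a non-negative integer linear combination of `x`
exceeds the largest integer with exactly one such representation. -/
theorem stmt14 (i : ℕ) (hi : 4 ≤ i) :
    ∃ x : List ℕ, x.length = i ∧ (∀ a ∈ x, 0 < a) ∧ x.Nodup ∧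
      x.foldr Nat.gcd 0 = 1 ∧ Reasonable x ∧
      ∃ g0 g1 : ℕ, IsGreatest {t : ℕ | numRep x t = 0} g0 ∧
        IsGreatest {t : ℕ | numRep x t = 1} g1 ∧ g1 < g0 := by
  obtain rfl | rfl | h : i = 4 ∨ i = 5 ∨ 6 ≤ i := by omega
  · exact case_four
  · exact case_five
  · have hm : 7 ≤ i + 1 := by omega
    refine ⟨Z (i + 1), ?_, fun a ha => ?_, nodup_Z hm, gcd_Z hm, reasonable_Z hm, greatest_Z hm⟩
    · simp [Z]
      omega
    · rw [mem_Z hm] at ha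
      omega
end

section
/- Let x_1, x_2 be coprime integers with 2 ≤ x_1 < x_2. For every integer i ≥ 0, the largest integer t having exactly i representations t = a x_1 + b x_2 with non-negative integers a, b is (i+1) x_1 x_2 - x_1 - x_2; in particular g_i(x_1, x_2) < g_{i+1}(x_1, x_2) for all i ≥ 0. -/
/-- The coefficients `a` of `p` occurring in the representations `t = a p + b q`. -/
def coeffSet (p q t : ℕ) : Set ℕ := {a | ∃ b, a * p + b * q = t}

lemma coeffSet_finite {p q t : ℕ} (hp : 0 < p) : (coeffSet p q t).Finite := by
  refine (Set.finite_Iic t).subset ?_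
  rintro a ⟨b, hb⟩
  have : a ≤ a * p := Nat.le_mul_of_pos_right a hp
  simp only [Set.mem_Iic]
  omega

lemma numRep_pair {p q : ℕ} (hq : 0 < q) (t : ℕ) :
    numRep [p, q] t = (coeffSet p q t).ncard := by
  unfold numRep
  rw [← Nat.card_coe_set_eq]
  have key : ∀ c : Fin [p, q].length → ℕ,
      ∑ i, c i * [p, q].get i = c (0 : Fin 2) * p + c (1 : Fin 2) * q := fun c =>
    Fin.sum_univ_two (fun i : Fin 2 => c i * [p, q].get i)
  refine Nat.card_eq_of_bijective
    (fun c => (⟨c.1 (0 : Fin 2), c.1 (1 : Fin 2), (key c.1).symm.trans c.2⟩ :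
      coeffSet p q t)) ⟨?_, ?_⟩
  · rintro ⟨c, hc⟩ ⟨d, hd⟩ h
    have h0 : c (0 : Fin 2) = d (0 : Fin 2) := congrArg Subtype.val h
    rw [key] at hc hd
    have h1 : c (1 : Fin 2) = d (1 : Fin 2) := by
      apply Nat.eq_of_mul_eq_mul_right hq
      rw [h0] at hc
      omega
    apply Subtype.ext
    funext j
    change Fin 2 at j
    fin_cases j
    · exact h0
    · exact h1
  · rintro ⟨a, b, hab⟩
    exact ⟨⟨(![a, b] : Fin 2 → ℕ), (key _).trans hab⟩, rfl⟩

lemma ncard_coeff_eq {p q t i : ℕ} (hp : 0 < p) (hq : 0 < q) (hcop : p.Coprime q)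
    (ht : t + p + q = (i + 1) * p * q) : (coeffSet p q t).ncard = i := by
  have himg : coeffSet p q t =
      ((Finset.range i).image (fun k => (k + 1) * q - 1) : Finset ℕ) := by
    ext a
    simp only [coeffSet, Set.mem_ofPred_eq, Finset.coe_image, Finset.coe_range, Set.mem_image,
      Set.mem_Iio]
    constructor
    · rintro ⟨b, hb⟩
      have hs : (a + 1) * p + (b + 1) * q = (i + 1) * p * q := by rw [← ht, ← hb]; ring
      have hd : q ∣ (a + 1) * p :=
        (Nat.dvd_add_left (Dvd.intro_left _ rfl)).1 (hs ▸ Dvd.intro_left _ rfl)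
      obtain ⟨k, hk⟩ := hcop.symm.dvd_of_dvd_mul_right hd
      obtain _ | k := k
      · omega
      refine ⟨k, ?_, by rw [mul_comm, ← hk]; rfl⟩
      rw [hk] at hs
      -- `b + 1 > 0` forces `(k + 1) p q < (i + 1) p q`.
      have hlt : (k + 1) * (p * q) < (i + 1) * (p * q) := by
        have : 0 < (b + 1) * q := by positivity
        linarith
      have := Nat.lt_of_mul_lt_mul_right hlt
      omega
    · rintro ⟨k, hk, rfl⟩
      obtain ⟨m, rfl⟩ := Nat.exists_eq_add_of_lt hk
      obtain ⟨p, rfl⟩ := Nat.exists_eq_succ_of_ne_zero hp.ne'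
      obtain ⟨q, rfl⟩ := Nat.exists_eq_succ_of_ne_zero hq.ne'
      refine ⟨m * (p + 1) + p, ?_⟩
      have : (k + 1) * q.succ - 1 = k * (q + 1) + q := by
        rw [Nat.succ_eq_add_one, add_mul]; omega
      rw [this]
      simp only [Nat.succ_eq_add_one] at *
      linarith
  rw [himg, Set.ncard_coe_finset, Finset.card_image_of_injective, Finset.card_range]
  intro k l h
  have hk : 0 < (k + 1) * q := by positivity
  have hl : 0 < (l + 1) * q := by positivity
  have h' : (k + 1) * q = (l + 1) * q := by dsimp only at h; omega
  have := Nat.eq_of_mul_eq_mul_right hq h'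
  omega

lemma lt_ncard_coeff {p q t i : ℕ} (hp : 0 < p) (hq : 0 < q) (hcop : p.Coprime q)
    (ht : (i + 1) * p * q < t + p + q) : i < (coeffSet p q t).ncard := by
  obtain ⟨a, haq, ha⟩ : ∃ a < q, (q : ℤ) ∣ t - a * p := by
    have hq' : (q : ℤ) ≠ 0 := Int.natCast_ne_zero_iff_pos.2 hq
    -- A Bézout coefficient of `p`, scaled by `t` and reduced modulo `q`.
    have hn := Int.emod_nonneg (t * p.gcdA q) hq'
    refine ⟨((t * p.gcdA q) % q).toNat, ?_, ?_⟩
    · have := Int.emod_lt_of_pos (t * p.gcdA q) (by exact_mod_cast hq : (0 : ℤ) < q)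
      omega
    · rw [Int.toNat_of_nonneg hn]
      have hb := Nat.gcd_eq_gcd_ab p q
      rw [hcop.gcd_eq_one] at hb
      have hm := Int.emod_add_mul_ediv (t * p.gcdA q) q
      refine ⟨t * p.gcdB q + (t * p.gcdA q / q) * p, ?_⟩
      push_cast at hb
      linear_combination (t : ℤ) * hb - p * hm
  have hsub : (((Finset.range (i + 1)).image (fun k => a + k * q) : Finset ℕ) : Set ℕ) ⊆
      coeffSet p q t := by
    intro n hn
    simp only [Finset.coe_image, Finset.coe_range, Set.mem_image, Set.mem_Iio] at hn
    obtain ⟨k, hk, rfl⟩ := hn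
    obtain ⟨c, hc⟩ := ha
    have hnn : 0 ≤ c - k * p := by
      have hkz : (k : ℤ) ≤ i := by exact_mod_cast Nat.lt_succ_iff.1 hk
      have haz : (a : ℤ) + 1 ≤ q := by exact_mod_cast haq
      have htz : ((i : ℤ) + 1) * p * q < t + p + q := by exact_mod_cast ht
      have e1 : (k : ℤ) * (p * q) ≤ i * (p * q) :=
        mul_le_mul_of_nonneg_right hkz (by positivity)
      have e2 : ((a : ℤ) + 1) * p ≤ q * p := mul_le_mul_of_nonneg_right haz (by positivity)
      have e3 : (0 : ℤ) < q * (c - k * p + 1) := by linarith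
      have := pos_of_mul_pos_right e3 (by positivity)
      omega
    refine ⟨(c - k * p).toNat, ?_⟩
    zify
    rw [Int.toNat_of_nonneg hnn]
    linear_combination -hc
  have hcard := Set.ncard_le_ncard hsub (coeffSet_finite hp)
  rw [Set.ncard_coe_finset, Finset.card_image_of_injective, Finset.card_range] at hcard
  · exact hcard
  · intro k l h
    exact Nat.eq_of_mul_eq_mul_right hq (Nat.add_left_cancel h)

/-- Let `x₁, x₂` be coprime integers with `2 ≤ x₁ < x₂`.  For every integer
`i ≥ 0`, the largest integer `t` having exactly `i` representations
`t = a x₁ + b x₂` with non-negative integers `a, b` is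
`(i+1) x₁ x₂ - x₁ - x₂`; in particular `gᵢ(x₁,x₂) < g_{i+1}(x₁,x₂)`. -/
theorem stmt18 (x₁ x₂ : ℕ) (h1 : 2 ≤ x₁) (h2 : x₁ < x₂)
    (hcop : Nat.Coprime x₁ x₂) (i : ℕ) :
    IsGreatest {t : ℕ | numRep [x₁, x₂] t = i}
      ((i + 1) * x₁ * x₂ - x₁ - x₂) ∧
    (i + 1) * x₁ * x₂ - x₁ - x₂ < (i + 2) * x₁ * x₂ - x₁ - x₂ := by
  have hp : 0 < x₁ := by omega
  have hq : 0 < x₂ := by omega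
  -- The truncated subtractions are genuine, as `x₁ + x₂ ≤ x₁ x₂`.
  have hb : x₁ + x₂ ≤ x₁ * x₂ := by nlinarith
  have e1 : (i + 1) * x₁ * x₂ = i * (x₁ * x₂) + x₁ * x₂ := by ring
  have e2 : (i + 2) * x₁ * x₂ = i * (x₁ * x₂) + x₁ * x₂ + x₁ * x₂ := by ring
  refine ⟨⟨?_, ?_⟩, by omega⟩
  · rw [Set.mem_ofPred_eq, numRep_pair hq]
    exact ncard_coeff_eq hp hq hcop (by omega)
  · intro t ht
    rw [Set.mem_ofPred_eq, numRep_pair hq] at ht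
    by_contra hlt
    have := lt_ncard_coeff (t := t) (i := i) hp hq hcop (by omega)
    omega
end

section
/- For the triple (8, 9, 15): the largest integer having exactly 14 representations as a non-negative integer linear combination of (8, 9, 15) is 172, and the largest integer having exactly 15 such representations is 169; in particular g_{14}(8,9,15) = 172 > 169 = g_{15}(8,9,15). -/
/-- The pairs `(b, c)` for which `t - 9b - 15c` is a non-negative multiple of `8`; the ranges
contain every pair with `9b + 15c ≤ t`. -/
def pairs (t : ℕ) : Finset (ℕ × ℕ) :=
  (Finset.range (t / 9 + 1) ×ˢ Finset.range (t / 15 + 1)).filter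
    fun p => 9 * p.1 + 15 * p.2 ≤ t ∧ (t - (9 * p.1 + 15 * p.2)) % 8 = 0

/-- The number of representations of `t` by `(8, 9, 15)`, in computable form. -/
def pairCount (t : ℕ) : ℕ := (pairs t).card

theorem mem_pairs {t : ℕ} {p : ℕ × ℕ} :
    p ∈ pairs t ↔ 9 * p.1 + 15 * p.2 ≤ t ∧ (t - (9 * p.1 + 15 * p.2)) % 8 = 0 := by
  simp only [pairs, Finset.mem_filter, Finset.mem_product, Finset.mem_range]
  omega

theorem sum_triple (c : Fin [8, 9, 15].length → ℕ) :
    ∑ i, c i * [8, 9, 15].get i = c (0 : Fin 3) * 8 + c (1 : Fin 3) * 9 + c (2 : Fin 3) * 15 :=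
  Fin.sum_univ_three (fun i : Fin 3 => c i * [8, 9, 15].get i)

theorem numRep_eq_pairCount (t : ℕ) : numRep [8, 9, 15] t = pairCount t := by
  rw [numRep, pairCount, ← Nat.card_eq_finsetCard]
  refine Nat.card_congr
    { toFun := fun c => ⟨(c.1 (1 : Fin 3), c.1 (2 : Fin 3)), ?_⟩
      invFun := fun p => ⟨(![(t - (9 * p.1.1 + 15 * p.1.2)) / 8, p.1.1, p.1.2] : Fin 3 → ℕ), ?_⟩
      left_inv := ?_
      right_inv := ?_ }
  · have hc := c.2
    rw [sum_triple] at hc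
    rw [mem_pairs]
    dsimp only
    omega
  · have hp := mem_pairs.1 p.2
    rw [sum_triple]
    simp only [Matrix.cons_val]
    omega
  · rintro ⟨c, hc⟩
    rw [sum_triple] at hc
    refine Subtype.ext (funext fun (i : Fin 3) => ?_)
    fin_cases i
    · change (t - (9 * c (1 : Fin 3) + 15 * c (2 : Fin 3))) / 8 = c (0 : Fin 3)
      omega
    · rfl
    · rfl
  · rintro ⟨p, hp⟩
    rfl

theorem pairCount_le_add_eight (t : ℕ) : pairCount t ≤ pairCount (t + 8) := by
  refine Finset.card_le_card fun p hp => ?_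
  rw [mem_pairs] at hp ⊢
  omega

theorem sixteen_le_pairCount (t : ℕ) (ht : 173 ≤ t) : 16 ≤ pairCount t := by
  induction t using Nat.strong_induction_on with
  | _ t ih =>
    by_cases h : t ≤ 180
    · interval_cases t <;> decide +kernel
    · obtain ⟨s, rfl⟩ : ∃ s, t = s + 8 := ⟨t - 8, by omega⟩
      exact (ih s (by omega) (by omega)).trans (pairCount_le_add_eight s)

/-- For the triple `(8, 9, 15)`: the largest integer having exactly `14`
representations as a non-negative integer linear combination is `172`, and the
largest integer having exactly `15` such representations is `169`; in
particular `g₁₄(8,9,15) = 172 > 169 = g₁₅(8,9,15)`. -/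
theorem stmt19 :
    IsGreatest {t : ℕ | numRep [8, 9, 15] t = 14} 172 ∧
      IsGreatest {t : ℕ | numRep [8, 9, 15] t = 15} 169 := by
  simp only [numRep_eq_pairCount]
  have h170 : pairCount 170 ≠ 15 := by decide +kernel
  have h171 : pairCount 171 ≠ 15 := by decide +kernel
  have h172 : pairCount 172 = 14 := by decide +kernel
  have h169 : pairCount 169 = 15 := by decide +kernel
  refine ⟨⟨h172, fun t ht => ?_⟩, ⟨h169, fun t ht => ?_⟩⟩
  · rw [Set.mem_ofPred_eq] at ht
    by_contra hlt
    have := sixteen_le_pairCount t (by omega)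
    omega
  · rw [Set.mem_ofPred_eq] at ht
    by_contra hlt
    by_cases h : 173 ≤ t
    · have := sixteen_le_pairCount t h
      omega
    · obtain rfl | rfl | rfl : t = 170 ∨ t = 171 ∨ t = 172 := by omega
      · exact h170 ht
      · exact h171 ht
      · omega
end
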